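/- arXiv:2506.04442 — 3 statements merged into one kernel-verified Lean document; each statement's English description precedes it below -/
import Mathlib

section
/- Let γ : [0,s] → ℝ³ be a 1-constrained arc (arclength-parametrized, C¹ and piecewise C², with ‖γ''(t)‖ ≤ 1 wherever defined) whose image is contained in a closed ball B of radius 1 in ℝ³. Then either the entire image γ([0,s]) is contained in the boundary sphere ∂B, or the open part of the arc avoids the boundary entirely: γ((0,s)) ∩ ∂B = ∅. In particular, a 1-constrained arc inside a radius-1 ball cannot touch the boundary sphere at a single isolated interior point. -/
open Set Metric

noncomputable section

/-- ℝ³ as a Euclidean space. -/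
abbrev E3 : Type := EuclideanSpace ℝ (Fin 3)

/-- `γ : [0,s] → ℝ³` is a κ-constrained curve: arclength-parametrized
(unit speed), `C¹` and piecewise `C²`, with `‖γ''(t)‖ ≤ κ` wherever the second
derivative is defined (i.e. away from a finite set of break points). -/
structure IsKConstrained (κ s : ℝ) (γ : ℝ → E3) : Prop where
  s_pos : 0 < s
  contDiff : ContDiffOn ℝ 1 γ (Icc 0 s)
  unitSpeed : ∀ t ∈ Icc 0 s, ‖derivWithin γ (Icc 0 s) t‖ = 1
  piecewiseC2 : ∃ F : Finset ℝ, ∀ t ∈ Icc 0 s, t ∉ F →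
    ∃ d : E3, HasDerivWithinAt (fun u => derivWithin γ (Icc 0 s) u) d (Icc 0 s) t ∧ ‖d‖ ≤ κ

/-- A 1-constrained arc: an embedded κ-constrained curve with κ = 1 and
distinct endpoints. -/
def IsOneConstrainedArc (s : ℝ) (γ : ℝ → E3) : Prop :=
  IsKConstrained 1 s γ ∧ InjOn γ (Icc 0 s) ∧ γ 0 ≠ γ s

/-!
The squared distance `φ t = ‖γ t - c‖ ^ 2` to the center of the ball is convex: away from the break
points `φ'' / 2 = ‖γ'‖ ^ 2 + ⟪γ - c, γ''⟫`, which Cauchy-Schwarz bounds below by `1 - R κ ≥ 0` for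
a unit-speed curve of curvature at most `κ` in a ball of radius `R`. Touching the sphere at an
interior parameter means that `φ` attains its maximum there, and a convex function with an interior
maximum is constant.
-/

section RealConvexity

variable {D F : Set ℝ} {f f' f'' : ℝ → ℝ}

theorem monotoneOn_of_hasDerivAt_nonneg_off_finite (hD : Convex ℝ D) (hF : F.Finite)
    (hf : ContinuousOn f D) (hf' : ∀ x ∈ interior D \ F, HasDerivAt f (f' x) x)
    (hf'_nonneg : ∀ x ∈ interior D \ F, 0 ≤ f' x) : MonotoneOn f D := by
  induction F, hF using Set.Finite.induction_on generalizing D with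
  | empty =>
    rw [sdiff_empty] at hf' hf'_nonneg
    exact monotoneOn_of_hasDerivWithinAt_nonneg hD hf
      (fun x hx ↦ (hf' x hx).hasDerivWithinAt) hf'_nonneg
  | @insert p F _ _ ih =>
    have monotoneOn_of_notMem_interior {D' : Set ℝ} (hD' : Convex ℝ D') (hsub : D' ⊆ D)
        (hp : p ∉ interior D') : MonotoneOn f D' := by
      have hdiff : interior D' \ F ⊆ interior D \ insert p F := fun x hx ↦
        ⟨interior_mono hsub hx.1, by rintro (rfl | hxF); exacts [hp hx.1, hx.2 hxF]⟩
      exact ih hD' (hf.mono hsub) (fun x hx ↦ hf' x (hdiff hx))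
        fun x hx ↦ hf'_nonneg x (hdiff hx)
    by_cases hpD : p ∈ D
    · have hleft : MonotoneOn f (D ∩ Iic p) :=
        monotoneOn_of_notMem_interior (hD.inter (convex_Iic p)) inter_subset_left (by simp)
      have hright : MonotoneOn f (D ∩ Ici p) :=
        monotoneOn_of_notMem_interior (hD.inter (convex_Ici p)) inter_subset_left (by simp)
      have hunion := hleft.union_right hright (c := p)
        ⟨⟨hpD, self_mem_Iic⟩, fun _ hx ↦ hx.2⟩ ⟨⟨hpD, self_mem_Ici⟩, fun _ hx ↦ hx.2⟩
      rwa [← inter_union_distrib_left, Iic_union_Ici, inter_univ] at hunion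
    · exact monotoneOn_of_notMem_interior hD Subset.rfl fun hp ↦ hpD (interior_subset hp)

theorem convexOn_of_hasDerivAt2_nonneg_off_finite (hD : Convex ℝ D) (hF : F.Finite)
    (hf : ContinuousOn f D) (hf' : ∀ x ∈ interior D, HasDerivAt f (f' x) x)
    (hf'_cont : ContinuousOn f' (interior D))
    (hf'' : ∀ x ∈ interior D \ F, HasDerivAt f' (f'' x) x)
    (hf''_nonneg : ∀ x ∈ interior D \ F, 0 ≤ f'' x) : ConvexOn ℝ D f := by
  have hf'_mono : MonotoneOn f' (interior D) :=
    monotoneOn_of_hasDerivAt_nonneg_off_finite hD.interior hF hf'_cont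
      (by rwa [interior_interior]) (by rwa [interior_interior])
  have hderiv : EqOn f' (deriv f) (interior D) := fun x hx ↦ (hf' x hx).deriv.symm
  exact (hf'_mono.congr hderiv).convexOn_of_deriv hD hf
    fun x hx ↦ (hf' x hx).differentiableAt.differentiableWithinAt

end RealConvexity

section InteriorMaximum

variable {V : Type*} [AddCommGroup V] [Module ℝ V] [TopologicalSpace V] [IsTopologicalAddGroup V]
  [ContinuousSMul ℝ V] {S : Set V} {z : V}

theorem exists_mem_openSegment_of_mem_interior (x : V) (hz : z ∈ interior S) :
    ∃ y ∈ S, z ∈ openSegment ℝ x y := by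
  have hS := (eventually_homothety_mem_of_mem_interior ℝ x hz).filter_mono
    (nhdsWithin_le_nhds (s := Ioi 1))
  obtain ⟨δ, hδS, hδ⟩ := (hS.and self_mem_nhdsWithin).exists
  have hδ_pos : 0 < δ := one_pos.trans hδ
  refine ⟨AffineMap.homothety x δ z, hδS, ?_⟩
  convert lineMap_mem_openSegment ℝ x (AffineMap.homothety x δ z)
    ⟨inv_pos.2 hδ_pos, inv_lt_one_of_one_lt₀ hδ⟩ using 1
  simp [AffineMap.lineMap_apply, AffineMap.homothety_apply, smul_smul, hδ_pos.ne']

theorem eqOn_const_of_convexOn_of_isMaxOn_interior {f : V → ℝ} (hf : ConvexOn ℝ S f)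
    (hz : z ∈ interior S) (hmax : IsMaxOn f S z) : EqOn f (fun _ ↦ f z) S := by
  intro x hx
  obtain ⟨y, hy, hzxy⟩ := exists_mem_openSegment_of_mem_interior x hz
  exact (hmax hx).antisymm (hf.le_left_of_right_le hx hy hzxy (hmax hy))

end InteriorMaximum

section Curves

variable {E : Type*} [NormedAddCommGroup E] [InnerProductSpace ℝ E] {D F : Set ℝ} {γ : ℝ → E}
  {c : E}

theorem convexOn_norm_sub_sq (hD : Convex ℝ D) (hF : F.Finite) (hγ : ContinuousOn γ D)
    (hγ' : ContDiffOn ℝ 1 γ (interior D))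
    (hγ'' : ∀ t ∈ interior D \ F, DifferentiableAt ℝ (deriv γ) t)
    (hle : ∀ t ∈ interior D \ F, ‖γ t - c‖ * ‖deriv (deriv γ) t‖ ≤ ‖deriv γ t‖ ^ 2) :
    ConvexOn ℝ D fun t ↦ ‖γ t - c‖ ^ 2 := by
  have hsub (t) (ht : t ∈ interior D) : HasDerivAt (fun u ↦ γ u - c) (deriv γ t) t :=
    ((hγ'.differentiableOn one_ne_zero).differentiableAt
      (isOpen_interior.mem_nhds ht)).hasDerivAt.sub_const c
  have hcont : ContinuousOn (fun t ↦ γ t - c) D := hγ.sub continuousOn_const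
  refine convexOn_of_hasDerivAt2_nonneg_off_finite hD hF (hcont.norm.pow 2)
    (fun t ht ↦ (hsub t ht).norm_sq)
    (continuousOn_const.mul ((hcont.mono interior_subset).inner
      (hγ'.continuousOn_deriv_of_isOpen isOpen_interior le_rfl)))
    (fun t ht ↦ ((hsub t ht.1).inner ℝ (hγ'' t ht).hasDerivAt).const_mul 2) fun t ht ↦ ?_
  have hcauchy := neg_le_of_abs_le (abs_real_inner_le_norm (γ t - c) (deriv (deriv γ) t))
  rw [real_inner_self_eq_norm_sq]
  linarith [hle t ht]

theorem oneConstrained_arc_in_unit_ball_boundary_dichotomy_general {κ R : ℝ} (hκR : R * κ ≤ 1)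
    (hD : Convex ℝ D) (hF : F.Finite) (hγ : ContinuousOn γ D) (hγ' : ContDiffOn ℝ 1 γ (interior D))
    (hspeed : ∀ t ∈ interior D, ‖deriv γ t‖ = 1)
    (hcurv : ∀ t ∈ interior D \ F,
      DifferentiableAt ℝ (deriv γ) t ∧ ‖deriv (deriv γ) t‖ ≤ κ)
    (hball : γ '' D ⊆ closedBall c R) :
    γ '' D ⊆ sphere c R ∨ γ '' interior D ∩ sphere c R = ∅ := by
  have hdist (t) (ht : t ∈ D) : ‖γ t - c‖ ≤ R := mem_closedBall_iff_norm.1 (hball ⟨t, ht, rfl⟩)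
  have hconvex : ConvexOn ℝ D fun t ↦ ‖γ t - c‖ ^ 2 := by
    refine convexOn_norm_sub_sq hD hF hγ hγ' (fun t ht ↦ (hcurv t ht).1) fun t ht ↦ ?_
    have hdist_t := hdist t (interior_subset ht.1)
    calc ‖γ t - c‖ * ‖deriv (deriv γ) t‖
        ≤ R * κ := mul_le_mul hdist_t (hcurv t ht).2 (norm_nonneg _)
          ((norm_nonneg _).trans hdist_t)
      _ ≤ ‖deriv γ t‖ ^ 2 := by rwa [hspeed t ht.1, one_pow]
  refine or_iff_not_imp_right.2 fun htouch ↦ ?_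
  obtain ⟨_, ⟨t₀, ht₀, rfl⟩, hsphere⟩ := nonempty_iff_ne_empty.2 htouch
  have hdist₀ : ‖γ t₀ - c‖ = R := mem_sphere_iff_norm.1 hsphere
  have hmax : IsMaxOn (fun t ↦ ‖γ t - c‖ ^ 2) D t₀ := fun t ht ↦
    pow_le_pow_left₀ (norm_nonneg _) ((hdist t ht).trans_eq hdist₀.symm) 2
  rintro _ ⟨t, ht, rfl⟩
  have hconst : ‖γ t - c‖ ^ 2 = ‖γ t₀ - c‖ ^ 2 :=
    eqOn_const_of_convexOn_of_isMaxOn_interior hconvex ht₀ hmax ht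
  rwa [mem_sphere_iff_norm, ← hdist₀, ← sq_eq_sq₀ (norm_nonneg _) (norm_nonneg _)]

end Curves

namespace IsKConstrained

variable {κ s t : ℝ} {γ : ℝ → E3}

theorem norm_deriv_eq_one (h : IsKConstrained κ s γ) (ht : t ∈ Ioo 0 s) : ‖deriv γ t‖ = 1 := by
  rw [← derivWithin_of_mem_nhds (Icc_mem_nhds ht.1 ht.2)]
  exact h.unitSpeed t (Ioo_subset_Icc_self ht)

theorem exists_finite_norm_deriv2_le (h : IsKConstrained κ s γ) :
    ∃ F : Set ℝ, F.Finite ∧ ∀ t ∈ Ioo 0 s \ F,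
      DifferentiableAt ℝ (deriv γ) t ∧ ‖deriv (deriv γ) t‖ ≤ κ := by
  obtain ⟨F, hF⟩ := h.piecewiseC2
  refine ⟨F, F.finite_toSet, fun t ⟨ht, htF⟩ ↦ ?_⟩
  obtain ⟨d, hd, hdκ⟩ := hF t (Ioo_subset_Icc_self ht) htF
  have hderiv : deriv γ =ᶠ[nhds t] derivWithin γ (Icc 0 s) := by
    filter_upwards [Ioo_mem_nhds ht.1 ht.2] with u hu
    exact (derivWithin_of_mem_nhds (Icc_mem_nhds hu.1 hu.2)).symm
  have hd' : HasDerivAt (deriv γ) d t :=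
    (hd.hasDerivAt (Icc_mem_nhds ht.1 ht.2)).congr_of_eventuallyEq hderiv
  exact ⟨hd'.differentiableAt, hd'.deriv.symm ▸ hdκ⟩

end IsKConstrained

/-- A 1-constrained arc contained in a closed ball of radius 1
either lies entirely on the boundary sphere, or its interior part avoids the
boundary sphere entirely; in particular it cannot touch the boundary at a
single isolated interior point. -/
theorem oneConstrained_arc_in_unit_ball_boundary_dichotomy
    (s : ℝ) (γ : ℝ → E3) (c : E3)
    (harc : IsOneConstrainedArc s γ)
    (hball : γ '' Icc 0 s ⊆ closedBall c 1) :
    γ '' Icc 0 s ⊆ sphere c 1 ∨ γ '' Ioo 0 s ∩ sphere c 1 = ∅ := by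
  obtain ⟨F, hF, hcurv⟩ := harc.1.exists_finite_norm_deriv2_le
  rw [← interior_Icc] at hcurv ⊢
  exact oneConstrained_arc_in_unit_ball_boundary_dichotomy_general (mul_one 1).le (convex_Icc 0 s)
    hF harc.1.contDiff.continuousOn (harc.1.contDiff.mono interior_subset)
    (fun t ht ↦ harc.1.norm_deriv_eq_one (interior_Icc (a := (0 : ℝ)) ▸ ht)) hcurv hball

end
end

section
/- Let γ : [0,s] → ℝ³ be a 1-constrained arc for which there exists a sphere S of radius 1 centered at a point on the negative z-axis with γ(0), γ(s) ∈ S and some point of the image of γ lying strictly above S. Then the diameter of the image of γ, i.e. sup over pairs t,t' ∈ [0,s] of ‖γ(t) − γ(t')‖, is at least 2. -/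
open Set Metric

noncomputable section

/-- A point `p` lies (strictly) above the radius-1 sphere centered at `c`:
the vertical line through `p` meets the sphere, and the z-coordinate of `p`
strictly exceeds that of the corresponding (upper) point of the sphere;
in particular `p` lies outside the sphere. -/
def AboveSphere (c p : E3) : Prop :=
  (p 0 - c 0) ^ 2 + (p 1 - c 1) ^ 2 ≤ 1 ∧
  c 2 + Real.sqrt (1 - ((p 0 - c 0) ^ 2 + (p 1 - c 1) ^ 2)) < p 2

/-!
Take the point `γ t₀` of the curve farthest from the centre `c`. It lies outside the ball, so `t₀`
is interior and the tangent `T t₀` is orthogonal to `γ t₀ - c`. The tangent turns at rate at most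
`κ`, so for a quarter turn (arc length `π / (2 * κ)`) the curve leaves `γ t₀` no more sharply than
a circle of radius `κ⁻¹` does. Such a circle, starting tangentially outside the ball, cannot reach
the ball within a quarter turn, hence on either side of `t₀` the curve lasts for at least a quarter
turn. During each of them it advances by at least `κ⁻¹` in the direction `T t₀`, and the two
advances add up to `2 * κ⁻¹`.
-/

open Filter InnerProductGeometry MeasureTheory Real Topology
open scoped NNReal RealInnerProductSpace

theorem lipschitzOnWith_Icc_of_norm_deriv_le_off_countable
    {E : Type*} [NormedAddCommGroup E] [NormedSpace ℝ E] [CompleteSpace E]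
    {f : ℝ → E} {a b : ℝ} {C : ℝ≥0} {s : Set ℝ} (hs : s.Countable)
    (hf : ContinuousOn f (Icc a b)) (hdiff : ∀ t ∈ Ioo a b \ s, DifferentiableAt ℝ f t)
    (hbound : ∀ t ∈ Ioo a b \ s, ‖deriv f t‖ ≤ C) : LipschitzOnWith C f (Icc a b) := by
  refine LipschitzOnWith.of_dist_le_mul fun y hy x hx ↦ ?_
  have hIoc : uIoc x y ⊆ Ioc a b := Ioc_subset_Ioc (le_min hx.1 hy.1) (max_le hx.2 hy.2)
  have hIoo : Ioo (min x y) (max x y) ⊆ Ioo a b :=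
    Ioo_subset_Ioo (le_min hx.1 hy.1) (max_le hx.2 hy.2)
  have hae : ∀ᵐ t, t ∈ uIoc x y → ‖deriv f t‖ ≤ C := by
    filter_upwards [hs.ae_notMem volume, (countable_singleton b).ae_notMem volume] with t hts htb ht
    exact hbound t ⟨⟨(hIoc ht).1, (hIoc ht).2.lt_of_ne htb⟩, hts⟩
  have hint : IntervalIntegrable (deriv f) volume x y :=
    (intervalIntegrable_const (c := (C : ℝ))).mono_fun (aestronglyMeasurable_deriv f _) <|
      (ae_restrict_iff' measurableSet_uIoc).2 <| hae.mono fun t ht htm ↦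
        (ht htm).trans (le_abs_self _)
  calc dist (f y) (f x) = ‖∫ t in x..y, deriv f t‖ := by
        rw [integral_eq_of_hasDerivAt_off_countable f (deriv f) hs
          (hf.mono (uIcc_subset_Icc hx hy))
          (fun t ht ↦ (hdiff t ⟨hIoo ht.1, ht.2⟩).hasDerivAt) hint, dist_eq_norm]
    _ ≤ C * |y - x| := intervalIntegral.norm_integral_le_of_norm_le_const_ae hae

theorem tendsto_natCast_mul_two_mul_arcsin (x : ℝ) :
    Tendsto (fun n : ℕ ↦ n * (2 * arcsin (x / n / 2))) atTop (𝓝 x) := by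
  have hderiv : HasDerivAt (fun u ↦ 2 * arcsin (x * u / 2)) x 0 := by
    have hlin : HasDerivAt (fun u : ℝ ↦ x * u / 2) (x / 2) 0 := by
      simpa using ((hasDerivAt_id (0 : ℝ)).const_mul x).div_const 2
    have harcsin : HasDerivAt arcsin 1 (x * 0 / 2) := by
      simpa using hasDerivAt_arcsin (x := 0) (by norm_num) (by norm_num)
    exact ((harcsin.comp 0 hlin).const_mul 2).congr_deriv (by ring)
  have hinv : Tendsto (fun n : ℕ ↦ (n : ℝ)⁻¹) atTop (𝓝[>] 0) :=
    tendsto_inv_atTop_nhdsGT_zero.comp tendsto_natCast_atTop_atTop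
  simpa [Function.comp_def, div_eq_mul_inv] using hderiv.tendsto_slope_zero_right.comp hinv

section InnerProductSpace

variable {E : Type*} [NormedAddCommGroup E] [InnerProductSpace ℝ E]

theorem exists_mem_Ioo_inner_sub_eq_zero {γ T : ℝ → E} {a b r : ℝ} {c : E}
    (hγ : ∀ t ∈ Icc a b, HasDerivWithinAt γ (T t) (Icc a b) t)
    (ha : γ a ∈ closedBall c r) (hb : γ b ∈ closedBall c r)
    (hout : ∃ t ∈ Icc a b, γ t ∉ closedBall c r) :
    ∃ t ∈ Ioo a b, γ t ∉ closedBall c r ∧ ⟪γ t - c, T t⟫ = 0 := by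
  obtain ⟨t₁, ht₁, hout⟩ := hout
  have hcont : ContinuousOn γ (Icc a b) := fun t ht ↦ (hγ t ht).continuousWithinAt
  obtain ⟨t₀, ht₀, hmax⟩ := isCompact_Icc.exists_isMaxOn ⟨t₁, ht₁⟩
    (show ContinuousOn (fun t ↦ ‖γ t - c‖ ^ 2) (Icc a b) by fun_prop)
  have hout₀ : γ t₀ ∉ closedBall c r := by
    rw [mem_closedBall_iff_norm, not_le] at hout ⊢
    exact hout.trans_le (le_of_sq_le_sq (hmax ht₁) (norm_nonneg _))
  have ht₀' : t₀ ∈ Ioo a b :=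
    ⟨ht₀.1.lt_of_ne fun h ↦ hout₀ (h ▸ ha), ht₀.2.lt_of_ne fun h ↦ hout₀ (h ▸ hb)⟩
  have hnhds : Icc a b ∈ 𝓝 t₀ := Icc_mem_nhds ht₀'.1 ht₀'.2
  have hcrit : 2 * ⟪γ t₀ - c, T t₀⟫ = 0 :=
    (hmax.isLocalMax hnhds).hasDerivAt_eq_zero (((hγ t₀ ht₀).hasDerivAt hnhds).sub_const c).norm_sq
  exact ⟨t₀, ht₀', hout₀, by linarith⟩

theorem norm_sin_smul_add_cos_smul {e v : E} (he : ‖e‖ = 1) (horth : ⟪v, e⟫ = 0) (θ : ℝ) :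
    ‖(‖v‖ * sin θ) • e + cos θ • v‖ = ‖v‖ := by
  have hsq : ‖(‖v‖ * sin θ) • e + cos θ • v‖ ^ 2 = ‖v‖ ^ 2 := by
    rw [norm_add_sq_real, real_inner_smul_left, real_inner_smul_right, real_inner_comm, horth,
      norm_smul, norm_smul, he, mul_one, mul_pow, norm_eq_abs, norm_eq_abs, sq_abs, sq_abs]
    linear_combination ‖v‖ ^ 2 * sin_sq_add_cos_sq θ
  exact (pow_left_inj₀ (norm_nonneg _) (norm_nonneg _) two_ne_zero).1 hsq

theorem angle_eq_two_mul_arcsin_norm_sub {x y : E} (hx : ‖x‖ = 1) (hy : ‖y‖ = 1) :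
    angle x y = 2 * arcsin (‖x - y‖ / 2) := by
  have hnonneg := angle_nonneg x y
  have hle_pi := angle_le_pi x y
  have hsin_nonneg : 0 ≤ sin (angle x y / 2) :=
    sin_nonneg_of_nonneg_of_le_pi (by linarith) (by linarith)
  have hsq : (‖x - y‖ / 2) ^ 2 = sin (angle x y / 2) ^ 2 := by
    rw [div_pow, norm_sub_sq_real, ← cos_angle_mul_norm_mul_norm, hx, hy, sin_sq_eq_half_sub,
      mul_div_cancel₀ _ two_ne_zero]
    ring
  have hchord : ‖x - y‖ / 2 = sin (angle x y / 2) :=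
    (pow_left_inj₀ (by positivity) hsin_nonneg two_ne_zero).1 hsq
  rw [hchord, arcsin_sin (by linarith) (by linarith)]
  ring

theorem angle_le_sum_range_angle {x : ℕ → E} (hx : x 0 ≠ 0) (n : ℕ) :
    angle (x 0) (x n) ≤ ∑ i ∈ Finset.range n, angle (x i) (x (i + 1)) := by
  induction n with
  | zero => simp [angle_self hx]
  | succ n ih =>
    rw [Finset.sum_range_succ]
    linarith [angle_le_angle_add_angle (x 0) (x n) (x (n + 1))]

theorem angle_le_mul_sub_of_lipschitzOnWith {T : ℝ → E} {κ : ℝ≥0} {a b : ℝ} (hab : a ≤ b)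
    (hunit : ∀ t ∈ Icc a b, ‖T t‖ = 1) (hlip : LipschitzOnWith κ T (Icc a b)) :
    angle (T a) (T b) ≤ κ * (b - a) := by
  refine ge_of_tendsto (tendsto_natCast_mul_two_mul_arcsin (κ * (b - a))) ?_
  filter_upwards [eventually_gt_atTop 0] with n hn
  have hn' : (0 : ℝ) < n := by exact_mod_cast hn
  let p (i : ℕ) : ℝ := a + i * ((b - a) / n)
  have hp_mem (i : ℕ) (hi : i ≤ n) : p i ∈ Icc a b := by
    have hi' : (i : ℝ) ≤ n := by exact_mod_cast hi
    have hstep : 0 ≤ (b - a) / n := div_nonneg (sub_nonneg.2 hab) hn'.le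
    have hlast : (n : ℝ) * ((b - a) / n) = b - a := mul_div_cancel₀ _ hn'.ne'
    exact ⟨by simp only [p]; nlinarith, by simp only [p]; nlinarith⟩
  have hstep (i : ℕ) (hi : i ∈ Finset.range n) :
      angle (T (p i)) (T (p (i + 1))) ≤ 2 * arcsin (κ * (b - a) / n / 2) := by
    have hi := Finset.mem_range.1 hi
    have hi₀ := hp_mem i hi.le
    have hi₁ := hp_mem (i + 1) hi
    rw [angle_eq_two_mul_arcsin_norm_sub (hunit _ hi₀) (hunit _ hi₁), norm_sub_rev]
    have hchord : ‖T (p (i + 1)) - T (p i)‖ ≤ κ * (b - a) / n := by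
      have hdist : |p (i + 1) - p i| = (b - a) / n := by
        rw [← abs_of_nonneg (div_nonneg (sub_nonneg.2 hab) hn'.le)]
        congr 1
        push_cast [p]
        ring
      simpa [dist_eq_norm, hdist, mul_div_assoc] using hlip.dist_le_mul _ hi₁ _ hi₀
    gcongr
  have hTa : T (p 0) ≠ 0 := norm_ne_zero_iff.1 (by simp [hunit _ (hp_mem 0 n.zero_le)])
  calc angle (T a) (T b) = angle (T (p 0)) (T (p n)) := by
        congr 2
        · simp [p]
        · simp [p, mul_div_cancel₀ _ hn'.ne']
    _ ≤ ∑ i ∈ Finset.range n, angle (T (p i)) (T (p (i + 1))) :=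
        angle_le_sum_range_angle (x := T ∘ p) hTa n
    _ ≤ ∑ _i ∈ Finset.range n, 2 * arcsin (κ * (b - a) / n / 2) := Finset.sum_le_sum hstep
    _ = n * (2 * arcsin (κ * (b - a) / n / 2)) := by simp

end InnerProductSpace

/-- `γ` is a unit-speed curve on `S` whose tangent `T` is `κ`-Lipschitz. This is the weak form of
"curvature at most `κ`", which needs no second derivative and no break points. The tangent is a
separate argument, so that it survives restriction to subintervals and reversal of the curve. -/
structure HasLipschitzUnitTangentOn {E : Type*} [NormedAddCommGroup E] [NormedSpace ℝ E]
    (κ : ℝ≥0) (γ T : ℝ → E) (S : Set ℝ) : Prop where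
  hasDerivWithinAt : ∀ t ∈ S, HasDerivWithinAt γ (T t) S t
  norm_tangent : ∀ t ∈ S, ‖T t‖ = 1
  lipschitzOnWith : LipschitzOnWith κ T S

namespace HasLipschitzUnitTangentOn

section NormedSpace

variable {E : Type*} [NormedAddCommGroup E] [NormedSpace ℝ E]
  {κ : ℝ≥0} {γ T : ℝ → E} {S S' : Set ℝ}

theorem continuousOn (h : HasLipschitzUnitTangentOn κ γ T S) : ContinuousOn γ S :=
  fun t ht ↦ (h.hasDerivWithinAt t ht).continuousWithinAt

theorem mono (h : HasLipschitzUnitTangentOn κ γ T S) (hS : S' ⊆ S) :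
    HasLipschitzUnitTangentOn κ γ T S' where
  hasDerivWithinAt t ht := (h.hasDerivWithinAt t (hS ht)).mono hS
  norm_tangent t ht := h.norm_tangent t (hS ht)
  lipschitzOnWith := h.lipschitzOnWith.mono hS

theorem comp_neg {a b : ℝ} (h : HasLipschitzUnitTangentOn κ γ T (Icc a b)) :
    HasLipschitzUnitTangentOn κ (fun t ↦ γ (-t)) (fun t ↦ -T (-t)) (Icc (-b) (-a)) := by
  have hmaps : MapsTo Neg.neg (Icc (-b) (-a)) (Icc a b) :=
    fun t ht ↦ ⟨le_neg.1 ht.2, neg_le.1 ht.1⟩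
  refine ⟨fun t ht ↦ ?_, fun t ht ↦ ?_, ?_⟩
  · simpa [Function.comp_def] using
      (h.hasDerivWithinAt _ (hmaps ht)).scomp t (hasDerivWithinAt_neg t _) hmaps
  · rw [norm_neg, h.norm_tangent _ (hmaps ht)]
  · refine LipschitzOnWith.of_dist_le_mul fun x hx y hy ↦ ?_
    simpa using h.lipschitzOnWith.dist_le_mul _ (hmaps hx) _ (hmaps hy)

end NormedSpace

variable {E : Type*} [NormedAddCommGroup E] [InnerProductSpace ℝ E]
  {κ : ℝ≥0} {γ T : ℝ → E} {a b : ℝ} {c : E}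

theorem norm_mul_cos_le_inner (h : HasLipschitzUnitTangentOn κ γ T (Icc a b)) {v : E}
    (hv : angle v (T a) + κ * (b - a) ≤ π) {t : ℝ} (ht : t ∈ Icc a b) :
    ‖v‖ * cos (angle v (T a) + κ * (t - a)) ≤ ⟪v, T t⟫ := by
  have hsub : Icc a t ⊆ Icc a b := Icc_subset_Icc_right ht.2
  have hturn : angle (T a) (T t) ≤ κ * (t - a) :=
    angle_le_mul_sub_of_lipschitzOnWith ht.1 (fun x hx ↦ h.norm_tangent x (hsub hx))
      (h.lipschitzOnWith.mono hsub)
  have hangle : angle v (T t) ≤ angle v (T a) + κ * (t - a) :=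
    (angle_le_angle_add_angle v (T a) (T t)).trans (by gcongr)
  have hle_pi : angle v (T a) + κ * (t - a) ≤ π := le_trans (by gcongr; exact ht.2) hv
  rw [← cos_angle_mul_norm_mul_norm, h.norm_tangent t ht, mul_one, mul_comm]
  gcongr
  exact cos_le_cos_of_nonneg_of_le_pi (angle_nonneg _ _) hle_pi hangle

/-- Equality holds for the circle of radius `κ⁻¹` turning away from `v`. -/
theorem norm_mul_sin_sub_sin_le_inner (h : HasLipschitzUnitTangentOn κ γ T (Icc a b))
    (hab : a ≤ b) {v : E} (hv : angle v (T a) + κ * (b - a) ≤ π) :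
    ‖v‖ * (sin (angle v (T a) + κ * (b - a)) - sin (angle v (T a))) ≤ κ * ⟪v, γ b - γ a⟫ := by
  have hcont := h.continuousOn
  have hderiv (t : ℝ) (ht : t ∈ Ioo a b) :
      HasDerivAt (fun t ↦ κ * ⟪v, γ t⟫ - ‖v‖ * sin (angle v (T a) + κ * (t - a)))
        (κ * (⟪v, T t⟫ - ‖v‖ * cos (angle v (T a) + κ * (t - a)))) t := by
    have hγ : HasDerivAt γ (T t) t :=
      (h.hasDerivWithinAt t (Ioo_subset_Icc_self ht)).hasDerivAt (Icc_mem_nhds ht.1 ht.2)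
    have hinner : HasDerivAt (fun t ↦ ⟪v, γ t⟫) ⟪v, T t⟫ t := by
      simpa using (hasDerivAt_const t v).inner ℝ hγ
    have hlin : HasDerivAt (fun t ↦ angle v (T a) + κ * (t - a)) κ t := by
      simpa using (((hasDerivAt_id t).sub_const a).const_mul (κ : ℝ)).const_add (angle v (T a))
    exact ((hinner.const_mul (κ : ℝ)).fun_sub (hlin.sin.const_mul ‖v‖)).congr_deriv (by ring)
  have hmono : MonotoneOn (fun t ↦ κ * ⟪v, γ t⟫ - ‖v‖ * sin (angle v (T a) + κ * (t - a)))
      (Icc a b) := by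
    refine monotoneOn_of_hasDerivWithinAt_nonneg (convex_Icc a b) (by fun_prop)
      (fun t ht ↦ (hderiv t (interior_Icc (a := a) ▸ ht)).hasDerivWithinAt) fun t ht ↦ ?_
    exact mul_nonneg κ.2 (sub_nonneg.2 (h.norm_mul_cos_le_inner hv (interior_subset ht)))
  have hle := hmono (left_mem_Icc.2 hab) (right_mem_Icc.2 hab) hab
  simp only [sub_self, mul_zero, add_zero] at hle
  rw [inner_sub_right]
  linarith

theorem sin_le_inner_tangent (h : HasLipschitzUnitTangentOn κ γ T (Icc a b)) (hab : a ≤ b)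
    (hturn : κ * (b - a) ≤ π) : sin (κ * (b - a)) ≤ κ * ⟪T a, γ b - γ a⟫ := by
  have hunit := h.norm_tangent a (left_mem_Icc.2 hab)
  have hangle : angle (T a) (T a) = 0 := angle_self (norm_ne_zero_iff.1 (by simp [hunit]))
  simpa [hunit, hangle] using h.norm_mul_sin_sub_sin_le_inner hab (v := T a) (by simpa [hangle])

theorem norm_mul_cos_sub_one_le_inner (h : HasLipschitzUnitTangentOn κ γ T (Icc a b))
    (hab : a ≤ b) (hturn : κ * (b - a) ≤ π / 2) {v : E} (hv : ⟪v, T a⟫ = 0) :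
    ‖v‖ * (cos (κ * (b - a)) - 1) ≤ κ * ⟪v, γ b - γ a⟫ := by
  have hangle : angle v (T a) = π / 2 := (inner_eq_zero_iff_angle_eq_pi_div_two _ _).1 hv
  simpa [hangle, add_comm (π / 2), sin_add_pi_div_two] using
    h.norm_mul_sin_sub_sin_le_inner hab (v := v) (by linarith)

theorem notMem_closedBall_of_mul_sub_lt (h : HasLipschitzUnitTangentOn κ γ T (Icc a b))
    (hκ : 0 < κ) (hab : a ≤ b) (hturn : κ * (b - a) < π / 2)
    (ha : γ a ∉ closedBall c (κ : ℝ)⁻¹) (horth : ⟪γ a - c, T a⟫ = 0) :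
    γ b ∉ closedBall c (κ : ℝ)⁻¹ := by
  have hκ' : (0 : ℝ) < κ := hκ
  rw [mem_closedBall_iff_norm, not_le, inv_lt_iff_one_lt_mul₀' hκ'] at ha ⊢
  set v := γ a - c
  set θ := κ * (b - a)
  have hθ : 0 ≤ θ := mul_nonneg κ.2 (sub_nonneg.2 hab)
  have hcos : 0 < cos θ := cos_pos_of_mem_Ioo ⟨by linarith [pi_pos], hturn⟩
  have hsin : 0 ≤ sin θ := sin_nonneg_of_nonneg_of_le_pi hθ (by linarith [pi_pos])
  have hv : 0 < ‖v‖ := pos_of_mul_pos_right (one_pos.trans ha) κ.2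
  have htan := h.sin_le_inner_tangent hab (by linarith [pi_pos])
  have hrad := h.norm_mul_cos_sub_one_le_inner hab hturn.le horth
  -- `w` is the radial direction at the end of the comparison circle.
  set w := (‖v‖ * sin θ) • T a + cos θ • v
  have hw : ‖w‖ = ‖v‖ :=
    norm_sin_smul_add_cos_smul (h.norm_tangent a (left_mem_Icc.2 hab)) horth θ
  have hexpand : κ * ⟪w, γ b - c⟫ =
      ‖v‖ * sin θ * (κ * ⟪T a, γ b - γ a⟫) + cos θ * (κ * ⟪v, γ b - γ a⟫ + κ * ‖v‖ ^ 2) := by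
    rw [show γ b - c = (γ b - γ a) + v by simp [v], inner_add_left, inner_add_right,
      inner_add_right, real_inner_smul_left, real_inner_smul_left, real_inner_smul_left,
      real_inner_smul_left, real_inner_comm v (T a), horth, real_inner_self_eq_norm_sq]
    ring
  have hstrict : ‖v‖ * 1 < ‖v‖ * (κ * ‖γ b - c‖) := calc
    ‖v‖ * 1 < ‖v‖ + ‖v‖ * cos θ * (κ * ‖v‖ - 1) := by
        have := mul_pos (mul_pos hv hcos) (sub_pos.2 ha)
        linarith
    _ = ‖v‖ * sin θ * sin θ + cos θ * (‖v‖ * (cos θ - 1) + κ * ‖v‖ ^ 2) := by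
        linear_combination -‖v‖ * sin_sq_add_cos_sq θ
    _ ≤ κ * ⟪w, γ b - c⟫ := by rw [hexpand]; gcongr
    _ ≤ κ * (‖w‖ * ‖γ b - c‖) := by gcongr; exact real_inner_le_norm _ _
    _ = ‖v‖ * (κ * ‖γ b - c‖) := by rw [hw]; ring
  exact lt_of_mul_lt_mul_left hstrict hv.le

theorem exists_inv_le_inner_sub_left (h : HasLipschitzUnitTangentOn κ γ T (Icc a b))
    (hκ : 0 < κ) (hab : a ≤ b) (ha : γ a ∉ closedBall c (κ : ℝ)⁻¹)
    (horth : ⟪γ a - c, T a⟫ = 0) (hb : γ b ∈ closedBall c (κ : ℝ)⁻¹) :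
    ∃ t ∈ Icc a b, (κ : ℝ)⁻¹ ≤ ⟪T a, γ t - γ a⟫ := by
  have hκ' : (0 : ℝ) < κ := hκ
  have hturn : π / 2 ≤ κ * (b - a) := by
    by_contra! hlt
    exact h.notMem_closedBall_of_mul_sub_lt hκ hab hlt ha horth hb
  have hat : a ≤ a + π / 2 / κ := le_add_of_nonneg_right (by positivity)
  have htb : a + π / 2 / κ ≤ b := by
    rw [← le_sub_iff_add_le', div_le_iff₀' hκ']
    exact hturn
  have hquarter : κ * (a + π / 2 / κ - a) = π / 2 := by field_simp; ring
  have hadvance := (h.mono (Icc_subset_Icc_right htb)).sin_le_inner_tangent hat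
    (hquarter.trans_le (half_le_self pi_pos.le))
  rw [hquarter, sin_pi_div_two] at hadvance
  exact ⟨_, ⟨hat, htb⟩, (inv_le_iff_one_le_mul₀' hκ').2 hadvance⟩

theorem exists_inv_le_inner_sub_right (h : HasLipschitzUnitTangentOn κ γ T (Icc a b))
    (hκ : 0 < κ) (hab : a ≤ b) (hb : γ b ∉ closedBall c (κ : ℝ)⁻¹)
    (horth : ⟪γ b - c, T b⟫ = 0) (ha : γ a ∈ closedBall c (κ : ℝ)⁻¹) :
    ∃ t ∈ Icc a b, (κ : ℝ)⁻¹ ≤ ⟪T b, γ b - γ t⟫ := by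
  obtain ⟨t, ht, hadvance⟩ := h.comp_neg.exists_inv_le_inner_sub_left hκ (neg_le_neg hab) (c := c)
    (by simpa using hb) (by simpa using horth) (by simpa using ha)
  refine ⟨-t, ⟨le_neg.1 ht.2, neg_le.1 ht.1⟩, ?_⟩
  rwa [neg_neg, inner_neg_left, ← inner_neg_right, neg_sub] at hadvance

end HasLipschitzUnitTangentOn

theorem oneConstrained_arc_above_sphere_diam_ge_two_general
    {E : Type*} [NormedAddCommGroup E] [InnerProductSpace ℝ E]
    {κ : ℝ≥0} {γ T : ℝ → E} {a b : ℝ} {c : E} (hκ : 0 < κ)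
    (h : HasLipschitzUnitTangentOn κ γ T (Icc a b))
    (ha : γ a ∈ closedBall c (κ : ℝ)⁻¹) (hb : γ b ∈ closedBall c (κ : ℝ)⁻¹)
    (hout : ∃ t ∈ Icc a b, γ t ∉ closedBall c (κ : ℝ)⁻¹) :
    2 * (κ : ℝ)⁻¹ ≤ diam (γ '' Icc a b) := by
  obtain ⟨t₀, ht₀, hout₀, horth⟩ :=
    exists_mem_Ioo_inner_sub_eq_zero h.hasDerivWithinAt ha hb hout
  have hright : Icc t₀ b ⊆ Icc a b := Icc_subset_Icc_left ht₀.1.le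
  have hleft : Icc a t₀ ⊆ Icc a b := Icc_subset_Icc_right ht₀.2.le
  obtain ⟨t₁, ht₁, hadvance₁⟩ :=
    (h.mono hright).exists_inv_le_inner_sub_left hκ ht₀.2.le hout₀ horth hb
  obtain ⟨t₂, ht₂, hadvance₂⟩ :=
    (h.mono hleft).exists_inv_le_inner_sub_right hκ ht₀.1.le hout₀ horth ha
  calc 2 * (κ : ℝ)⁻¹ ≤ ⟪T t₀, γ t₁ - γ t₀⟫ + ⟪T t₀, γ t₀ - γ t₂⟫ := by linarith
    _ = ⟪T t₀, γ t₁ - γ t₂⟫ := by rw [← inner_add_right, sub_add_sub_cancel]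
    _ ≤ ‖T t₀‖ * ‖γ t₁ - γ t₂‖ := real_inner_le_norm _ _
    _ = dist (γ t₁) (γ t₂) := by
        rw [h.norm_tangent t₀ (Ioo_subset_Icc_self ht₀), one_mul, dist_eq_norm]
    _ ≤ diam (γ '' Icc a b) :=
        dist_le_diam_of_mem (isCompact_Icc.image_of_continuousOn h.continuousOn).isBounded
          (mem_image_of_mem γ (hright ht₁)) (mem_image_of_mem γ (hleft ht₂))

theorem IsKConstrained.hasLipschitzUnitTangentOn {κ : ℝ≥0} {s : ℝ} {γ : ℝ → E3}
    (h : IsKConstrained κ s γ) :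
    HasLipschitzUnitTangentOn κ γ (derivWithin γ (Icc 0 s)) (Icc 0 s) := by
  obtain ⟨F, hF⟩ := h.piecewiseC2
  have hsecond (t : ℝ) (ht : t ∈ Ioo 0 s \ F) :
      ∃ d, HasDerivAt (derivWithin γ (Icc 0 s)) d t ∧ ‖d‖ ≤ κ := by
    obtain ⟨d, hd, hdκ⟩ := hF t (Ioo_subset_Icc_self ht.1) ht.2
    exact ⟨d, hd.hasDerivAt (Icc_mem_nhds ht.1.1 ht.1.2), hdκ⟩
  refine ⟨fun t ht ↦ (h.contDiff.differentiableOn one_ne_zero t ht).hasDerivWithinAt, h.unitSpeed,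
    lipschitzOnWith_Icc_of_norm_deriv_le_off_countable F.countable_toSet
      (h.contDiff.continuousOn_derivWithin (uniqueDiffOn_Icc h.s_pos) le_rfl)
      (fun t ht ↦ ?_) (fun t ht ↦ ?_)⟩ <;> obtain ⟨d, hd, hdκ⟩ := hsecond t ht
  · exact hd.differentiableAt
  · rwa [hd.deriv]

theorem AboveSphere.notMem_closedBall {c p : E3} (h : AboveSphere c p) : p ∉ closedBall c 1 := by
  obtain ⟨-, hlt⟩ := h
  have hnorm_sq : ‖p - c‖ ^ 2 = (p 0 - c 0) ^ 2 + (p 1 - c 1) ^ 2 + (p 2 - c 2) ^ 2 := by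
    simp [EuclideanSpace.norm_sq_eq, Fin.sum_univ_three]
  have hheight : 1 - ((p 0 - c 0) ^ 2 + (p 1 - c 1) ^ 2) < (p 2 - c 2) ^ 2 :=
    (sqrt_lt' ((sqrt_nonneg _).trans_lt (lt_sub_iff_add_lt'.2 hlt))).1 (lt_sub_iff_add_lt'.2 hlt)
  rw [mem_closedBall_iff_norm, not_le, ← one_lt_sq_iff₀ (norm_nonneg _)]
  linarith

/-- A 1-constrained arc whose endpoints lie on a radius-1 sphere
centered on the negative z-axis and which has a point lying strictly above that
sphere must have diameter at least 2. -/
theorem oneConstrained_arc_above_sphere_diam_ge_two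
    (s : ℝ) (γ : ℝ → E3) (c : E3)
    (harc : IsOneConstrainedArc s γ)
    (hc0 : c 0 = 0) (hc1 : c 1 = 0) (hc2 : c 2 < 0)
    (h0 : γ 0 ∈ sphere c 1) (hs : γ s ∈ sphere c 1)
    (habove : ∃ t ∈ Icc 0 s, AboveSphere c (γ t)) :
    2 ≤ Metric.diam (γ '' Icc 0 s) := by
  obtain ⟨t, ht, habove⟩ := habove
  simpa using oneConstrained_arc_above_sphere_diam_ge_two_general (κ := 1) (c := c) one_pos
    (IsKConstrained.hasLipschitzUnitTangentOn (by simpa using harc.1))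
    (sphere_subset_closedBall (by simpa using h0)) (sphere_subset_closedBall (by simpa using hs))
    ⟨t, ht, by simpa using habove.notMem_closedBall⟩

end
end

section
/- For points x, y ∈ ℝ³ with 0 < ‖x − y‖ < 2, the space Σ(x,y) of 1-constrained arcs from x to y, equipped with the C¹ metric, has exactly two connected components, and one of these components consists exclusively of embedded arcs. -/
open Set Metric

noncomputable section

/-- `γ : [0,s] → ℝ³` is a 1-constrained curve: arclength-parametrized
(unit speed), `C¹` and piecewise `C²`, with `‖γ''(t)‖ ≤ 1` wherever the second
derivative is defined (i.e. away from a finite set of break points). -/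
structure IsOneConstrained (s : ℝ) (γ : ℝ → E3) : Prop where
  s_pos : 0 < s
  contDiff : ContDiffOn ℝ 1 γ (Icc 0 s)
  unitSpeed : ∀ t ∈ Icc 0 s, ‖derivWithin γ (Icc 0 s) t‖ = 1
  piecewiseC2 : ∃ F : Finset ℝ, ∀ t ∈ Icc 0 s, t ∉ F →
    ∃ d : E3, HasDerivWithinAt (fun u => derivWithin γ (Icc 0 s) u) d (Icc 0 s) t ∧ ‖d‖ ≤ 1

/-- `Σ(x,y)`: the space of 1-constrained arcs from `x` to `y`, recorded as a pair
(arclength `s`, curve `γ`). -/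
def SigmaSpace (x y : E3) : Type :=
  { p : ℝ × (ℝ → E3) // IsOneConstrained p.1 p.2 ∧ p.2 0 = x ∧ p.2 p.1 = y }

/-- The `C¹` topology on `Σ(x,y)`: the topology induced by recording the arclength
together with the curve and its derivative (reparametrized over `[0,1]`), the
function spaces carrying the topology of uniform (`C⁰`) convergence; this is the
topology of `C¹` convergence of arcs. -/
instance sigmaSpaceTopology (x y : E3) : TopologicalSpace (SigmaSpace x y) :=
  TopologicalSpace.induced
    (fun q : SigmaSpace x y =>
      ((q.1.1,
        UniformFun.ofFun (fun t : unitInterval => q.1.2 ((t : ℝ) * q.1.1)),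
        UniformFun.ofFun (fun t : unitInterval =>
          derivWithin q.1.2 (Icc 0 q.1.1) ((t : ℝ) * q.1.1))) :
        ℝ × UniformFun unitInterval E3 × UniformFun unitInterval E3))
    inferInstance

open Filter InnerProductGeometry MeasureTheory Topology
open scoped InnerProductSpace Real unitInterval

/-!
The unit tangent of an arc is a `1`-Lipschitz curve in the sphere, so over a time interval of
length `π` the tangent at the midpoint pairs with the displacement to at least `∫ cos = 2`. Since
`‖y - x‖ < 2`, no arc from `x` to `y` has length `π`, and `length < π` is a clopen condition.
Along an arc shorter than `π` every tangent has positive inner product with the total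
displacement, hence the arc is embedded, and its initial subarcs, turned onto the direction of
`y - x` and enlarged to displacement `y - x`, contract it to the segment.

An arc longer than `π` gets to distance at least `2` from its endpoint. At the point farthest
away, at distance `R` say, the tangent is orthogonal to the direction of the endpoint, so the
circle of radius `R` about the endpoint is tangent to the arc. Run along this circle through an
increasing angle, rotating the rest of the arc accordingly, until `m` turns are complete. For
large `m` the two ends of the arc can then be shortened to nothing while the circle drifts slowly
to make up for their displacement, with curvature below one since `R ≥ 2`. What remains are
drifting circles, which are joined to one another since orthonormal pairs in `ℝ³` form a path
connected space.
-/

/-! ### Unit vector fields with Lipschitz constant one -/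

section LipschitzBound

variable {E : Type*} [NormedAddCommGroup E] [NormedSpace ℝ E] [CompleteSpace E]

theorem norm_sub_le_of_norm_deriv_le_off_countable {f : ℝ → E} {C a b : ℝ} {S : Set ℝ}
    (hS : S.Countable) (hab : a ≤ b) (hf : ContinuousOn f (Icc a b))
    (hderiv : ∀ t ∈ Ioo a b \ S, ∃ d : E, HasDerivAt f d t ∧ ‖d‖ ≤ C) :
    ‖f b - f a‖ ≤ C * (b - a) := by
  have hderiv_eq : ∀ t ∈ Ioo a b \ S, HasDerivAt f (deriv f t) t ∧ ‖deriv f t‖ ≤ C := by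
    intro t ht
    obtain ⟨d, hd, hdC⟩ := hderiv t ht
    exact ⟨hd.deriv.symm ▸ hd, hd.deriv.symm ▸ hdC⟩
  have hbound : ∀ᵐ t, t ∈ Ioc a b → ‖deriv f t‖ ≤ C := by
    filter_upwards [(hS.insert b).ae_notMem volume] with t ht htab
    rw [mem_insert_iff, not_or] at ht
    exact (hderiv_eq t ⟨⟨htab.1, lt_of_le_of_ne htab.2 ht.1⟩, ht.2⟩).2
  have hint : IntervalIntegrable (deriv f) volume a b := by
    refine (intervalIntegrable_const (c := C)).mono_fun'
      (stronglyMeasurable_deriv f).aestronglyMeasurable ?_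
    rw [uIoc_of_le hab]
    exact (ae_restrict_iff' measurableSet_Ioc).2 hbound
  have hFTC : ∫ t in a..b, deriv f t = f b - f a := by
    refine integral_eq_of_hasDerivAt_off_countable f (deriv f) hS ?_ ?_ hint
    · rwa [uIcc_of_le hab]
    · rw [min_eq_left hab, max_eq_right hab]
      exact fun t ht => (hderiv_eq t ht).1
  calc ‖f b - f a‖ = ‖∫ t in a..b, deriv f t‖ := by rw [hFTC]
    _ ≤ C * |b - a| := intervalIntegral.norm_integral_le_of_norm_le_const_ae (by
        rwa [uIoc_of_le hab])
    _ = C * (b - a) := by rw [abs_of_nonneg (sub_nonneg.2 hab)]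

end LipschitzBound

section UnitField

variable {E : Type*} [NormedAddCommGroup E] [InnerProductSpace ℝ E]

theorem cos_angle_of_norm_eq_one {a b : E} (ha : ‖a‖ = 1) (hb : ‖b‖ = 1) :
    Real.cos (angle a b) = ⟪a, b⟫_ℝ := by
  rw [cos_angle, ha, hb, mul_one, div_one]

theorem norm_sub_eq_two_mul_sin_angle_div_two {a b : E} (ha : ‖a‖ = 1) (hb : ‖b‖ = 1) :
    ‖a - b‖ = 2 * Real.sin (angle a b / 2) := by
  have hsin : 0 ≤ Real.sin (angle a b / 2) :=
    Real.sin_nonneg_of_nonneg_of_le_pi (by linarith [angle_nonneg a b])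
      (by linarith [angle_le_pi a b, angle_nonneg a b])
  refine (pow_left_inj₀ (norm_nonneg _) (by positivity) two_ne_zero).1 ?_
  rw [norm_sub_sq_real, ha, hb, ← cos_angle_of_norm_eq_one ha hb, mul_pow, Real.sin_sq_eq_half_sub,
    mul_div_cancel₀ _ two_ne_zero]
  ring

theorem angle_le_norm_sub_add_pow_three {a b : E} (ha : ‖a‖ = 1) (hb : ‖b‖ = 1) :
    angle a b ≤ ‖a - b‖ + ‖a - b‖ ^ 3 := by
  have hchord := norm_sub_eq_two_mul_sin_angle_div_two ha hb
  rcases (angle_nonneg a b).eq_or_lt with hzero | hpos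
  · rw [← hzero]
    positivity
  have hcube : angle a b / 2 - (angle a b / 2) ^ 3 / 6 < Real.sin (angle a b / 2) :=
    Real.sin_gt_sub_cube (half_pos hpos)
  have hjordan : 2 / π * (angle a b / 2) ≤ Real.sin (angle a b / 2) :=
    Real.mul_le_sin (half_pos hpos).le (by linarith [angle_le_pi a b])
  have hpi : 1 / 2 ≤ 2 / π := by
    rw [div_le_div_iff₀ two_pos Real.pi_pos]
    linarith [Real.pi_le_four]
  have hdouble : angle a b ≤ 2 * ‖a - b‖ := by nlinarith
  have hpow : angle a b ^ 3 ≤ (2 * ‖a - b‖) ^ 3 := by gcongr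
  nlinarith [pow_nonneg (norm_nonneg (a - b)) 3]

theorem inner_intervalIntegral [CompleteSpace E] {u : ℝ → E} (hu : Continuous u) (v : E)
    (a b : ℝ) : ⟪v, ∫ t in a..b, u t⟫_ℝ = ∫ t in a..b, ⟪v, u t⟫_ℝ :=
  ((innerSL ℝ v).intervalIntegral_comp_comm (hu.intervalIntegrable a b)).symm

variable {u : ℝ → E}

theorem slope_angle_le_of_lipschitzWith_one (hunit : ∀ t, ‖u t‖ = 1)
    (hlip : LipschitzWith 1 u) {a x z : ℝ} (hxz : x < z) :
    slope (fun t => angle (u a) (u t)) x z ≤ 1 + (z - x) ^ 2 := by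
  have hdist : ‖u x - u z‖ ≤ z - x := by
    have := hlip.dist_le_mul x z
    rwa [dist_eq_norm, NNReal.coe_one, one_mul, Real.dist_eq, abs_sub_comm,
      abs_of_pos (sub_pos.2 hxz)] at this
  rw [slope_def_field, div_le_iff₀ (sub_pos.2 hxz)]
  calc angle (u a) (u z) - angle (u a) (u x)
      ≤ angle (u x) (u z) := by linarith [angle_le_angle_add_angle (u a) (u x) (u z)]
    _ ≤ ‖u x - u z‖ + ‖u x - u z‖ ^ 3 := angle_le_norm_sub_add_pow_three (hunit x) (hunit z)
    _ ≤ (z - x) + (z - x) ^ 3 := by gcongr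
    _ = (1 + (z - x) ^ 2) * (z - x) := by ring

theorem angle_le_sub_of_lipschitzWith_one (hunit : ∀ t, ‖u t‖ = 1)
    (hlip : LipschitzWith 1 u) {a b : ℝ} (hab : a ≤ b) :
    angle (u a) (u b) ≤ b - a := by
  have hne (t : ℝ) : u t ≠ 0 := norm_ne_zero_iff.1 (by rw [hunit]; exact one_ne_zero)
  have hcont : Continuous fun t => angle (u a) (u t) := continuous_iff_continuousAt.2 fun t =>
    (continuousAt_angle (hne a) (hne t)).comp (f := fun t => (u a, u t))
      (continuous_const.prodMk hlip.continuous).continuousAt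
  refine image_le_of_liminf_slope_right_le_deriv_boundary (B := fun t => t - a)
    (B' := fun _ => 1) hcont.continuousOn ?_ (by fun_prop)
    (fun x _ => ((hasDerivAt_id x).sub_const a).hasDerivWithinAt) (fun x _ r hr => ?_)
    (right_mem_Icc.2 hab)
  · simp only [angle_self (hne a), sub_self, le_refl]
  · have hlim : Tendsto (fun z => 1 + (z - x) ^ 2) (𝓝[>] x) (𝓝 1) :=
      tendsto_nhdsWithin_of_tendsto_nhds (Continuous.tendsto' (by fun_prop) _ _ (by simp))
    refine Eventually.frequently ?_
    filter_upwards [hlim.eventually_lt_const hr, self_mem_nhdsWithin] with z hz hxz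
    exact (slope_angle_le_of_lipschitzWith_one hunit hlip hxz).trans_lt hz

theorem cos_sub_le_inner_of_lipschitzWith_one (hunit : ∀ t, ‖u t‖ = 1)
    (hlip : LipschitzWith 1 u) {a b : ℝ} (hab : |a - b| ≤ π) :
    Real.cos (a - b) ≤ ⟪u a, u b⟫_ℝ := by
  wlog h : a ≤ b generalizing a b
  · rw [← Real.cos_neg, neg_sub, real_inner_comm]
    exact this (abs_sub_comm a b ▸ hab) (le_of_not_ge h)
  rw [abs_sub_comm, abs_of_nonneg (sub_nonneg.2 h)] at hab
  rw [← Real.cos_neg, neg_sub, ← cos_angle_of_norm_eq_one (hunit a) (hunit b)]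
  exact Real.cos_le_cos_of_nonneg_of_le_pi (angle_nonneg _ _) hab
    (angle_le_sub_of_lipschitzWith_one hunit hlip h)

theorem sin_add_sin_le_inner_integral [CompleteSpace E] (hunit : ∀ t, ‖u t‖ = 1)
    (hlip : LipschitzWith 1 u) {a b c : ℝ} (hac : a ≤ c) (hcb : c ≤ b)
    (hab : b - a ≤ π) :
    Real.sin (c - a) + Real.sin (b - c) ≤ ⟪u c, ∫ t in a..b, u t⟫_ℝ := by
  have hcont := hlip.continuous
  have hcos : ∫ t in a..b, Real.cos (c - t) = Real.sin (c - a) + Real.sin (b - c) := by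
    rw [intervalIntegral.integral_comp_sub_left Real.cos, integral_cos, ← neg_sub b c,
      Real.sin_neg, sub_neg_eq_add]
  rw [inner_intervalIntegral hcont, ← hcos]
  refine intervalIntegral.integral_mono_on (hac.trans hcb)
    (Continuous.intervalIntegrable (by fun_prop) _ _)
    (Continuous.intervalIntegrable (by fun_prop) _ _) fun t ht => ?_
  exact cos_sub_le_inner_of_lipschitzWith_one hunit hlip
    (abs_le.2 ⟨by linarith [ht.2], by linarith [ht.1]⟩)

end UnitField

/-! ### Velocities of curves with curvature at most one -/

section ConstrainedVelocity

variable {E : Type*} [NormedAddCommGroup E] [NormedSpace ℝ E]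

/-- `p` is nonvanishing on `[a, b]` and piecewise differentiable with `‖p'‖ ≤ ‖p‖ ^ 2`. For the
velocity `p` of a regular curve, not necessarily of unit speed, this forces curvature at most
one. -/
structure IsConstrainedOn (p : ℝ → E) (a b : ℝ) : Prop where
  ne_zero : ∀ t ∈ Icc a b, p t ≠ 0
  exists_hasDerivAt : ∃ F : Finset ℝ, ∀ t ∈ Ioo a b, t ∉ F →
    ∃ d : E, HasDerivAt p d t ∧ ‖d‖ ≤ ‖p t‖ ^ 2

namespace IsConstrainedOn

variable {p q : ℝ → E} {a b c : ℝ}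

theorem congr (hp : IsConstrainedOn p a b) (hpq : EqOn p q (Icc a b)) : IsConstrainedOn q a b where
  ne_zero t ht := hpq ht ▸ hp.ne_zero t ht
  exists_hasDerivAt := by
    obtain ⟨F, hF⟩ := hp.exists_hasDerivAt
    refine ⟨F, fun t ht htF => ?_⟩
    obtain ⟨d, hd, hle⟩ := hF t ht htF
    have hnear : q =ᶠ[𝓝 t] p := by
      filter_upwards [Icc_mem_nhds ht.1 ht.2] with r hr using (hpq hr).symm
    exact ⟨d, hd.congr_of_eventuallyEq hnear, hpq (Ioo_subset_Icc_self ht) ▸ hle⟩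

theorem mono (hp : IsConstrainedOn p a b) {a' b' : ℝ} (ha : a ≤ a') (hb : b' ≤ b) :
    IsConstrainedOn p a' b' where
  ne_zero t ht := hp.ne_zero t (Icc_subset_Icc ha hb ht)
  exists_hasDerivAt := by
    obtain ⟨F, hF⟩ := hp.exists_hasDerivAt
    exact ⟨F, fun t ht => hF t (Ioo_subset_Ioo ha hb ht)⟩

theorem union (hab : IsConstrainedOn p a b) (hbc : IsConstrainedOn p b c) :
    IsConstrainedOn p a c where
  ne_zero t ht := (le_total t b).elim (fun h => hab.ne_zero t ⟨ht.1, h⟩)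
    fun h => hbc.ne_zero t ⟨h, ht.2⟩
  exists_hasDerivAt := by
    obtain ⟨F, hF⟩ := hab.exists_hasDerivAt
    obtain ⟨G, hG⟩ := hbc.exists_hasDerivAt
    refine ⟨insert b (F ∪ G), fun t ht htFG => ?_⟩
    simp only [Finset.mem_insert, Finset.mem_union, not_or] at htFG
    obtain ⟨htb, htF, htG⟩ := htFG
    rcases lt_or_gt_of_ne htb with h | h
    · exact hF t ⟨ht.1, h⟩ htF
    · exact hG t ⟨h, ht.2⟩ htG

theorem comp_add_mul {m : ℝ} (hm : 0 < m) (hp : IsConstrainedOn p (c + m * a) (c + m * b)) :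
    IsConstrainedOn (fun t => m • p (c + m * t)) a b where
  ne_zero t ht := smul_ne_zero hm.ne' <| hp.ne_zero _
    ⟨by gcongr; exact ht.1, by gcongr; exact ht.2⟩
  exists_hasDerivAt := by
    obtain ⟨F, hF⟩ := hp.exists_hasDerivAt
    refine ⟨F.image fun r => (r - c) / m, fun t ht htF => ?_⟩
    obtain ⟨d, hd, hle⟩ := hF (c + m * t) ⟨by gcongr; exact ht.1, by gcongr; exact ht.2⟩
      fun hmem => htF (Finset.mem_image.2 ⟨_, hmem, by field_simp; ring⟩)
    have haffine : HasDerivAt (fun t => c + m * t) m t := by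
      simpa using ((hasDerivAt_id t).const_mul m).const_add c
    refine ⟨m • m • d, (hd.scomp t haffine).const_smul m, ?_⟩
    rw [smul_smul, norm_smul, norm_smul, mul_pow, norm_mul, ← sq]
    gcongr

theorem comp_const_add (hp : IsConstrainedOn p (c + a) (c + b)) :
    IsConstrainedOn (fun t => p (c + t)) a b := by
  simpa only [one_mul, one_smul] using comp_add_mul (m := 1) (c := c) (a := a) (b := b) one_pos
    (by simpa only [one_mul] using hp)

theorem const_smul (hp : IsConstrainedOn p a b) {m : ℝ} (hm : 1 ≤ m) :
    IsConstrainedOn (fun t => m • p t) a b where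
  ne_zero t ht := smul_ne_zero (by positivity) (hp.ne_zero t ht)
  exists_hasDerivAt := by
    obtain ⟨F, hF⟩ := hp.exists_hasDerivAt
    refine ⟨F, fun t ht htF => ?_⟩
    obtain ⟨d, hd, hle⟩ := hF t ht htF
    refine ⟨m • d, hd.const_smul m, ?_⟩
    rw [norm_smul, norm_smul, mul_pow, Real.norm_of_nonneg (by positivity)]
    exact mul_le_mul (le_self_pow₀ hm two_ne_zero) hle (norm_nonneg d) (by positivity)

theorem linearIsometry_comp {F : Type*} [NormedAddCommGroup F] [NormedSpace ℝ F]
    (hp : IsConstrainedOn p a b) (L : E →ₗᵢ[ℝ] F) : IsConstrainedOn (fun t => L (p t)) a b where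
  ne_zero t ht := fun h => hp.ne_zero t ht ((map_eq_zero_iff L L.injective).1 h)
  exists_hasDerivAt := by
    obtain ⟨F, hF⟩ := hp.exists_hasDerivAt
    refine ⟨F, fun t ht htF => ?_⟩
    obtain ⟨d, hd, hle⟩ := hF t ht htF
    exact ⟨L d, L.toContinuousLinearMap.hasFDerivAt.comp_hasDerivAt t hd, by simpa using hle⟩

theorem const {v : E} (hv : v ≠ 0) : IsConstrainedOn (fun _ => v) a b where
  ne_zero _ _ := hv
  exists_hasDerivAt := ⟨∅, fun t _ _ => ⟨0, hasDerivAt_const t v, by simp⟩⟩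

end IsConstrainedOn

/-- The velocity of a curve on `[a, b]` with velocity `g`, reparametrized affinely over `[0, 1]`. -/
def unitRescale (g : ℝ → E) (a b t : ℝ) : E := (b - a) • g (a + (b - a) * t)

theorem unitRescale_congr {g g' : ℝ → E} {a b : ℝ} (hab : a ≤ b) (hg : EqOn g g' (Icc a b)) :
    EqOn (unitRescale g a b) (unitRescale g' a b) (Icc 0 1) := by
  intro t ht
  have hmem : a + (b - a) * t ∈ Icc a b :=
    ⟨by nlinarith [mul_nonneg (sub_nonneg.2 hab) ht.1], by nlinarith [ht.2]⟩
  simp only [unitRescale, hg hmem]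

/-- `p` is the velocity over `[0, 1]` of a regular curve of curvature at most one with total
displacement `v`. -/
structure IsVelocity (v : E) (p : ℝ → E) : Prop where
  continuous : Continuous p
  isConstrainedOn : IsConstrainedOn p 0 1
  integral_eq : ∫ t in (0 : ℝ)..1, p t = v

theorem IsConstrainedOn.isVelocity_unitRescale {g : ℝ → E} {a b : ℝ} {v : E}
    (hg : IsConstrainedOn g a b) (hcont : Continuous g) (hab : a < b)
    (hint : ∫ t in a..b, g t = v) : IsVelocity v (unitRescale g a b) where
  continuous := by unfold unitRescale; fun_prop
  isConstrainedOn := comp_add_mul (sub_pos.2 hab) (by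
    rwa [mul_zero, add_zero, mul_one, add_sub_cancel])
  integral_eq := by
    unfold unitRescale
    rw [intervalIntegral.integral_smul, intervalIntegral.smul_integral_comp_add_mul, mul_zero,
      add_zero, mul_one, add_sub_cancel, hint]

/-- `p` and `p'` agree on `[0, 1]` with the ends of a continuous family of velocities with total
displacement `v`. -/
def VelocityHomotopic (v : E) (p p' : ℝ → E) : Prop :=
  ∃ P : I → ℝ → E, Continuous (Function.uncurry P) ∧ (∀ k, IsVelocity v (P k)) ∧
    EqOn (P 0) p (Icc 0 1) ∧ EqOn (P 1) p' (Icc 0 1)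

theorem VelocityHomotopic.congr {v : E} {p p' q q' : ℝ → E} (h : VelocityHomotopic v p p')
    (hp : EqOn p q (Icc 0 1)) (hp' : EqOn p' q' (Icc 0 1)) : VelocityHomotopic v q q' := by
  obtain ⟨P, hcont, hP, hP_zero, hP_one⟩ := h
  exact ⟨P, hcont, hP, hP_zero.trans hp, hP_one.trans hp'⟩

theorem velocityHomotopic_unitRescale {v : E} {g : I → ℝ → E} {a b : I → ℝ}
    (hg : Continuous (Function.uncurry g)) (ha : Continuous a) (hb : Continuous b)
    (hab : ∀ k, a k < b k) (hcon : ∀ k, IsConstrainedOn (g k) (a k) (b k))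
    (hint : ∀ k, ∫ t in (a k)..(b k), g k t = v) :
    VelocityHomotopic v (unitRescale (g 0) (a 0) (b 0)) (unitRescale (g 1) (a 1) (b 1)) := by
  refine ⟨fun k => unitRescale (g k) (a k) (b k), ?_, fun k => ?_, fun _ _ => rfl, fun _ _ => rfl⟩
  · have hcomp : Continuous fun z : I × ℝ => g z.1 (a z.1 + (b z.1 - a z.1) * z.2) :=
      hg.comp (f := fun z : I × ℝ => (z.1, a z.1 + (b z.1 - a z.1) * z.2)) (by fun_prop)
    exact ((hb.comp continuous_fst).sub (ha.comp continuous_fst)).smul hcomp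
  · exact (hcon k).isVelocity_unitRescale (hg.comp (Continuous.prodMk_right k)) (hab k) (hint k)

end ConstrainedVelocity

/-! ### Arc-length reparametrization -/

section ArcLength

variable {E : Type*} [NormedAddCommGroup E]

/-- The length over `[0, t]` of a curve with velocity `p`. -/
def arcLength (p : ℝ → E) (t : ℝ) : ℝ := ∫ r in (0 : ℝ)..t, ‖p r‖

/-- The fraction of the total length over `[0, 1]` covered at time `t`. -/
def lengthFraction (p : ℝ → E) (t : I) : I :=
  projIcc 0 1 zero_le_one (arcLength p t / arcLength p 1)

/-- The time in `[0, 1]` at which a curve with velocity `p` has covered the length `z`. -/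
def timeAtLength (p : ℝ → E) (z : ℝ) : ℝ :=
  (Function.invFun (lengthFraction p) (projIcc 0 1 zero_le_one (z / arcLength p 1)) : I)

/-- `p` is the velocity of a regular `C¹` curve over `[0, 1]`. -/
structure IsRegularVelocity (p : ℝ → E) : Prop where
  continuous : Continuous p
  ne_zero : ∀ t ∈ Icc (0 : ℝ) 1, p t ≠ 0

variable {p : ℝ → E}

theorem arcLength_zero : arcLength p 0 = 0 := intervalIntegral.integral_same

theorem timeAtLength_mem_Icc (z : ℝ) : timeAtLength p z ∈ Icc (0 : ℝ) 1 := Subtype.property _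

theorem hasDerivAt_arcLength (hp : Continuous p) (t : ℝ) : HasDerivAt (arcLength p) ‖p t‖ t :=
  hp.norm.integral_hasStrictDerivAt 0 t |>.hasDerivAt

theorem arcLength_congr {q : ℝ → E} (hpq : EqOn p q (Icc 0 1)) :
    EqOn (arcLength p) (arcLength q) (Icc 0 1) := fun t ht =>
  intervalIntegral.integral_congr fun r hr => by
    rw [uIcc_of_le ht.1] at hr
    simp only [hpq ⟨hr.1, hr.2.trans ht.2⟩]

theorem timeAtLength_congr {q : ℝ → E} (hpq : EqOn p q (Icc 0 1)) :
    timeAtLength p = timeAtLength q := by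
  have hone := arcLength_congr hpq (right_mem_Icc.2 zero_le_one)
  have hfraction : lengthFraction p = lengthFraction q := by
    funext t
    simp only [lengthFraction, arcLength_congr hpq t.2, hone]
  funext z
  simp only [timeAtLength, hfraction, hone]

namespace IsRegularVelocity

theorem strictMonoOn_arcLength (hp : IsRegularVelocity p) :
    StrictMonoOn (arcLength p) (Icc 0 1) := by
  refine strictMonoOn_of_deriv_pos (convex_Icc 0 1)
    (fun t _ => (hasDerivAt_arcLength hp.continuous t).continuousAt.continuousWithinAt)
    fun t ht => ?_
  rw [(hasDerivAt_arcLength hp.continuous t).deriv]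
  exact norm_pos_iff.2 (hp.ne_zero t (interior_subset ht))

theorem arcLength_one_pos (hp : IsRegularVelocity p) : 0 < arcLength p 1 := by
  simpa only [arcLength_zero] using hp.strictMonoOn_arcLength (left_mem_Icc.2 zero_le_one)
    (right_mem_Icc.2 zero_le_one) zero_lt_one

theorem coe_lengthFraction (hp : IsRegularVelocity p) (t : I) :
    (lengthFraction p t : ℝ) = arcLength p t / arcLength p 1 := by
  have hmono := hp.strictMonoOn_arcLength.monotoneOn
  have hnonneg := hmono (left_mem_Icc.2 zero_le_one) t.2 t.2.1
  have hle := hmono t.2 (right_mem_Icc.2 zero_le_one) t.2.2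
  rw [arcLength_zero] at hnonneg
  rw [lengthFraction, projIcc_of_mem zero_le_one
    ⟨div_nonneg hnonneg hp.arcLength_one_pos.le, (div_le_one hp.arcLength_one_pos).2 hle⟩]

theorem bijective_lengthFraction (hp : IsRegularVelocity p) :
    Function.Bijective (lengthFraction p) := by
  have hpos := hp.arcLength_one_pos
  constructor
  · intro s t hst
    have hval := congrArg Subtype.val hst
    rw [hp.coe_lengthFraction, hp.coe_lengthFraction, div_left_inj' hpos.ne'] at hval
    exact Subtype.ext (hp.strictMonoOn_arcLength.injOn s.2 t.2 hval)
  · intro z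
    have hz : (z : ℝ) * arcLength p 1 ∈ Icc (arcLength p 0) (arcLength p 1) := by
      rw [arcLength_zero]
      exact ⟨mul_nonneg z.2.1 hpos.le, mul_le_of_le_one_left hpos.le z.2.2⟩
    obtain ⟨t, ht, htz⟩ := intermediate_value_Icc zero_le_one (fun t _ =>
      (hasDerivAt_arcLength hp.continuous t).continuousAt.continuousWithinAt) hz
    refine ⟨⟨t, ht⟩, Subtype.ext ?_⟩
    rw [hp.coe_lengthFraction, htz, mul_div_cancel_right₀ _ hpos.ne']

theorem arcLength_timeAtLength (hp : IsRegularVelocity p) {z : ℝ}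
    (hz : z ∈ Icc 0 (arcLength p 1)) : arcLength p (timeAtLength p z) = z := by
  have hpos := hp.arcLength_one_pos
  have hmem : z / arcLength p 1 ∈ Icc (0 : ℝ) 1 :=
    ⟨div_nonneg hz.1 hpos.le, (div_le_one hpos).2 hz.2⟩
  have hinv := congrArg Subtype.val <| Function.rightInverse_invFun
    hp.bijective_lengthFraction.2 (projIcc 0 1 zero_le_one (z / arcLength p 1))
  rwa [hp.coe_lengthFraction, projIcc_of_mem zero_le_one hmem, div_left_inj' hpos.ne',
    ← projIcc_of_mem zero_le_one hmem] at hinv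

theorem timeAtLength_zero (hp : IsRegularVelocity p) : timeAtLength p 0 = 0 :=
  hp.strictMonoOn_arcLength.injOn (timeAtLength_mem_Icc 0) (left_mem_Icc.2 zero_le_one) <| by
    rw [hp.arcLength_timeAtLength (left_mem_Icc.2 hp.arcLength_one_pos.le), arcLength_zero]

theorem timeAtLength_arcLength_one (hp : IsRegularVelocity p) :
    timeAtLength p (arcLength p 1) = 1 :=
  hp.strictMonoOn_arcLength.injOn (timeAtLength_mem_Icc _) (right_mem_Icc.2 zero_le_one) <|
    hp.arcLength_timeAtLength (right_mem_Icc.2 hp.arcLength_one_pos.le)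

section Family

variable {K : Type*} [TopologicalSpace K] {P : K → ℝ → E}

theorem continuous_arcLength_one_family (hcont : Continuous (Function.uncurry P)) :
    Continuous fun k => arcLength (P k) 1 :=
  intervalIntegral.continuous_parametric_intervalIntegral_of_continuous
    (f := fun k r => ‖P k r‖) hcont.norm continuous_const

/-- Continuity of the inverse in the parameter comes from compactness: `(k, t) ↦ (k, fraction)` is
a continuous bijection of a compact Hausdorff space. -/
theorem continuous_timeAtLength_family [CompactSpace K] [T2Space K]
    (hcont : Continuous (Function.uncurry P)) (hP : ∀ k, IsRegularVelocity (P k)) :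
    Continuous fun z : K × ℝ => timeAtLength (P z.1) z.2 := by
  have hone := continuous_arcLength_one_family hcont
  have hlength : Continuous fun z : K × I => arcLength (P z.1) z.2 :=
    intervalIntegral.continuous_parametric_intervalIntegral_of_continuous
      (f := fun (z : K × I) r => ‖P z.1 r‖)
      (hcont.norm.comp (f := fun z : (K × I) × ℝ => (z.1.1, z.2)) (by fun_prop)) (by fun_prop)
  let fractionEquiv : K × I ≃ K × I :=
    { toFun z := (z.1, lengthFraction (P z.1) z.2)
      invFun z := (z.1, Function.invFun (lengthFraction (P z.1)) z.2)
      left_inv z := Prod.ext rfl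
        (Function.leftInverse_invFun (hP z.1).bijective_lengthFraction.1 z.2)
      right_inv z := Prod.ext rfl
        (Function.rightInverse_invFun (hP z.1).bijective_lengthFraction.2 z.2) }
  have hfraction : Continuous fractionEquiv := continuous_fst.prodMk <| continuous_projIcc.comp <|
    hlength.div (hone.comp continuous_fst) fun z => (hP z.1).arcLength_one_pos.ne'
  have hinverse : Continuous fun z => (fractionEquiv.symm z).2 :=
    continuous_snd.comp hfraction.homeoOfEquivCompactToT2.symm.continuous
  exact continuous_subtype_val.comp <| hinverse.comp <| continuous_fst.prodMk <|
    (continuous_projIcc (h := zero_le_one)).comp <| continuous_snd.div (hone.comp continuous_fst)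
      fun z => (hP z.1).arcLength_one_pos.ne'

end Family

theorem continuous_timeAtLength (hp : IsRegularVelocity p) : Continuous (timeAtLength p) :=
  (continuous_timeAtLength_family (K := Unit) (P := fun _ => p) (hp.continuous.comp continuous_snd)
    fun _ => hp).comp (Continuous.prodMk_right ())

theorem hasDerivAt_timeAtLength (hp : IsRegularVelocity p) {z : ℝ}
    (hz : z ∈ Ioo 0 (arcLength p 1)) :
    HasDerivAt (timeAtLength p) ‖p (timeAtLength p z)‖⁻¹ z := by
  refine (hasDerivAt_arcLength hp.continuous _).of_local_left_inverse
    hp.continuous_timeAtLength.continuousAt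
    (norm_ne_zero_iff.2 (hp.ne_zero _ (timeAtLength_mem_Icc z))) ?_
  filter_upwards [Icc_mem_nhds hz.1 hz.2] with y hy using hp.arcLength_timeAtLength hy

theorem timeAtLength_mem_Ioo (hp : IsRegularVelocity p) {z : ℝ}
    (hz : z ∈ Ioo 0 (arcLength p 1)) : timeAtLength p z ∈ Ioo (0 : ℝ) 1 := by
  have hlength := hp.arcLength_timeAtLength (Ioo_subset_Icc_self hz)
  refine ⟨lt_of_le_of_ne (timeAtLength_mem_Icc z).1 fun h => hz.1.ne ?_,
    lt_of_le_of_ne (timeAtLength_mem_Icc z).2 fun h => hz.2.ne ?_⟩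
  · rw [← hlength, ← h, arcLength_zero]
  · rw [← hlength, h]

end IsRegularVelocity

end ArcLength

section UnitTangent

variable {E : Type*} [NormedAddCommGroup E] [InnerProductSpace ℝ E]

theorem norm_sub_inner_smul_le {e : E} (he : ‖e‖ = 1) (d : E) : ‖d - ⟪e, d⟫_ℝ • e‖ ≤ ‖d‖ := by
  refine (sq_le_sq₀ (norm_nonneg _) (norm_nonneg _)).1 ?_
  have hsq : ‖d - ⟪e, d⟫_ℝ • e‖ ^ 2 = ‖d‖ ^ 2 - ⟪e, d⟫_ℝ ^ 2 := by
    rw [norm_sub_sq_real, norm_smul, he, inner_smul_right, real_inner_comm, Real.norm_eq_abs,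
      mul_one, sq_abs]
    ring
  rw [hsq]
  exact sub_le_self _ (sq_nonneg _)

theorem exists_hasDerivAt_normalize_norm_le {p : ℝ → E} {d : E} {t : ℝ} (hp : HasDerivAt p d t)
    (ht : p t ≠ 0) :
    ∃ d' : E, HasDerivAt (fun r => NormedSpace.normalize (p r)) d' t ∧ ‖d'‖ ≤ ‖d‖ / ‖p t‖ := by
  have hpos : 0 < ‖p t‖ := norm_pos_iff.2 ht
  set e := NormedSpace.normalize (p t) with he
  have hnorm : HasDerivAt (fun r => ‖p r‖) ⟪e, d⟫_ℝ t := by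
    have hsqrt := hp.norm_sq.sqrt (pow_pos hpos 2).ne'
    simp only [Real.sqrt_sq (norm_nonneg _)] at hsqrt
    convert hsqrt using 1
    rw [he, NormedSpace.normalize, real_inner_smul_left]
    field_simp
  refine ⟨‖p t‖⁻¹ • (d - ⟪e, d⟫_ℝ • e), ?_, ?_⟩
  · have hquot : HasDerivAt (fun r => NormedSpace.normalize (p r))
        (‖p t‖⁻¹ • d + (-⟪e, d⟫_ℝ / ‖p t‖ ^ 2) • p t) t := (hnorm.inv hpos.ne').smul hp
    convert hquot using 1
    rw [← NormedSpace.norm_smul_normalize (p t), ← he, norm_smul, norm_norm,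
      NormedSpace.norm_normalize_eq_one_iff.2 ht, mul_one, smul_smul, smul_sub, smul_smul,
      sub_eq_add_neg, ← neg_smul]
    congr 2
    field_simp
  · rw [norm_smul, norm_inv, norm_norm, ← div_eq_inv_mul]
    gcongr
    exact norm_sub_inner_smul_le (NormedSpace.norm_normalize_eq_one_iff.2 ht) d

/-- The unit tangent, as a function of arc length, of a curve with velocity `p` over `[0, 1]`. -/
def unitTangent (p : ℝ → E) (z : ℝ) : E := NormedSpace.normalize (p (timeAtLength p z))

/-- The arc-length parametrization of the curve with initial point `x` and velocity `p`. -/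
def arcLengthCurve (x : E) (p : ℝ → E) (r : ℝ) : E := x + ∫ z in (0 : ℝ)..r, unitTangent p z

theorem arcLengthCurve_congr (x : E) {p q : ℝ → E} (hpq : EqOn p q (Icc 0 1)) :
    arcLengthCurve x p = arcLengthCurve x q := by
  funext r
  simp only [arcLengthCurve, unitTangent, timeAtLength_congr hpq, hpq (timeAtLength_mem_Icc _)]

namespace IsRegularVelocity

variable {p : ℝ → E}

theorem norm_unitTangent (hp : IsRegularVelocity p) (z : ℝ) : ‖unitTangent p z‖ = 1 :=
  NormedSpace.norm_normalize_eq_one_iff.2 (hp.ne_zero _ (timeAtLength_mem_Icc z))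

theorem continuous_unitTangent_family {K : Type*} [TopologicalSpace K] [CompactSpace K] [T2Space K]
    {P : K → ℝ → E} (hcont : Continuous (Function.uncurry P)) (hP : ∀ k, IsRegularVelocity (P k)) :
    Continuous fun z : K × ℝ => unitTangent (P z.1) z.2 := by
  have hvelocity : Continuous fun z : K × ℝ => P z.1 (timeAtLength (P z.1) z.2) :=
    hcont.comp (continuous_fst.prodMk (continuous_timeAtLength_family hcont hP))
  exact (hvelocity.norm.inv₀ fun z =>
    norm_ne_zero_iff.2 ((hP z.1).ne_zero _ (timeAtLength_mem_Icc _))).smul hvelocity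

theorem continuous_unitTangent (hp : IsRegularVelocity p) : Continuous (unitTangent p) :=
  (continuous_unitTangent_family (K := Unit) (P := fun _ => p) (hp.continuous.comp continuous_snd)
    fun _ => hp).comp (Continuous.prodMk_right ())

theorem continuous_arcLengthCurve_family {K : Type*} [TopologicalSpace K] [CompactSpace K]
    [T2Space K] (x : E) {P : K → ℝ → E} (hcont : Continuous (Function.uncurry P))
    (hP : ∀ k, IsRegularVelocity (P k)) :
    Continuous fun z : K × ℝ => arcLengthCurve x (P z.1) z.2 :=
  continuous_const.add <|
    intervalIntegral.continuous_parametric_intervalIntegral_of_continuous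
      (f := fun (z : K × ℝ) r => unitTangent (P z.1) r)
      ((continuous_unitTangent_family hcont hP).comp
        (f := fun z : (K × ℝ) × ℝ => (z.1.1, z.2)) (by fun_prop)) (by fun_prop)

variable [CompleteSpace E]

theorem hasDerivAt_arcLengthCurve (hp : IsRegularVelocity p) (x : E) (r : ℝ) :
    HasDerivAt (arcLengthCurve x p) (unitTangent p r) r :=
  (hp.continuous_unitTangent.integral_hasStrictDerivAt 0 r).hasDerivAt.const_add x

theorem contDiff_arcLengthCurve (hp : IsRegularVelocity p) (x : E) :
    ContDiff ℝ 1 (arcLengthCurve x p) := by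
  refine contDiff_one_iff_deriv.2
    ⟨fun r => (hp.hasDerivAt_arcLengthCurve x r).differentiableAt, ?_⟩
  rw [funext fun r => (hp.hasDerivAt_arcLengthCurve x r).deriv]
  exact hp.continuous_unitTangent

theorem derivWithin_arcLengthCurve (hp : IsRegularVelocity p) (x : E) {r : ℝ}
    (hr : r ∈ Icc 0 (arcLength p 1)) :
    derivWithin (arcLengthCurve x p) (Icc 0 (arcLength p 1)) r = unitTangent p r :=
  (hp.hasDerivAt_arcLengthCurve x r).hasDerivWithinAt.derivWithin
    (uniqueDiffOn_Icc hp.arcLength_one_pos r hr)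

theorem arcLengthCurve_arcLength_one (hp : IsRegularVelocity p) (x : E) :
    arcLengthCurve x p (arcLength p 1) = x + ∫ t in (0 : ℝ)..1, p t := by
  have hprimitive (t : ℝ) : HasDerivAt (fun t => ∫ r in (0 : ℝ)..t, p r) (p t) t :=
    (hp.continuous.integral_hasStrictDerivAt 0 t).hasDerivAt
  have hFTC := intervalIntegral.integral_eq_sub_of_hasDerivAt_of_le hp.arcLength_one_pos.le
    (f := fun z => ∫ r in (0 : ℝ)..(timeAtLength p z), p r) (f' := unitTangent p)
    (fun z _ => ((hprimitive _).continuousAt.comp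
      (f := timeAtLength p) hp.continuous_timeAtLength.continuousAt).continuousWithinAt)
    (fun z hz => (hprimitive _).scomp z (hp.hasDerivAt_timeAtLength hz))
    (hp.continuous_unitTangent.intervalIntegrable _ _)
  rw [arcLengthCurve, hFTC, hp.timeAtLength_arcLength_one, hp.timeAtLength_zero,
    intervalIntegral.integral_same, sub_zero]

end IsRegularVelocity

namespace IsVelocity

variable {v : E} {p : ℝ → E}

theorem isRegularVelocity (hp : IsVelocity v p) : IsRegularVelocity p :=
  ⟨hp.continuous, hp.isConstrainedOn.ne_zero⟩

theorem exists_hasDerivAt_unitTangent (hp : IsVelocity v p) :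
    ∃ F : Finset ℝ, ∀ z ∈ Ioo 0 (arcLength p 1), z ∉ F →
      ∃ d : E, HasDerivAt (unitTangent p) d z ∧ ‖d‖ ≤ 1 := by
  have hreg := hp.isRegularVelocity
  obtain ⟨F, hF⟩ := hp.isConstrainedOn.exists_hasDerivAt
  refine ⟨F.image (arcLength p), fun z hz hzF => ?_⟩
  have hlength := hreg.arcLength_timeAtLength (Ioo_subset_Icc_self hz)
  obtain ⟨d, hd, hdp⟩ := hF _ (hreg.timeAtLength_mem_Ioo hz) fun hmem =>
    hzF (Finset.mem_image.2 ⟨_, hmem, hlength⟩)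
  have hne : p (timeAtLength p z) ≠ 0 := hreg.ne_zero _ (timeAtLength_mem_Icc z)
  have hpos : 0 < ‖p (timeAtLength p z)‖ := norm_pos_iff.2 hne
  obtain ⟨d', hd', hle⟩ := exists_hasDerivAt_normalize_norm_le hd hne
  refine ⟨_, hd'.scomp z (hreg.hasDerivAt_timeAtLength hz), ?_⟩
  rw [norm_smul, norm_inv, norm_norm, inv_mul_le_one₀ hpos]
  refine hle.trans ((div_le_iff₀ hpos).2 ?_)
  rwa [← sq]

end IsVelocity

end UnitTangent

/-! ### Arcs and their velocities -/

theorem continuous_uniformFun_ofFun {K X β : Type*} [TopologicalSpace K] [TopologicalSpace X]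
    [CompactSpace X] [UniformSpace β] {f : K → X → β} (hf : Continuous (Function.uncurry f)) :
    Continuous fun k => UniformFun.ofFun (f k) := by
  let g (k : K) : C(X, β) := ⟨f k, hf.comp (Continuous.prodMk_right k)⟩
  have hg : Continuous g := ContinuousMap.continuous_of_continuous_uncurry g hf
  refine continuous_iff_continuousAt.2 fun k => ?_
  rw [ContinuousAt, UniformFun.tendsto_iff_tendstoUniformly]
  exact ContinuousMap.tendsto_iff_tendstoUniformly.1 hg.continuousAt

theorem IsVelocity.isOneConstrained_arcLengthCurve {v : E3} {p : ℝ → E3} (hp : IsVelocity v p)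
    (x : E3) : IsOneConstrained (arcLength p 1) (arcLengthCurve x p) where
  s_pos := hp.isRegularVelocity.arcLength_one_pos
  contDiff := (hp.isRegularVelocity.contDiff_arcLengthCurve x).contDiffOn
  unitSpeed t ht := by
    rw [hp.isRegularVelocity.derivWithin_arcLengthCurve x ht, hp.isRegularVelocity.norm_unitTangent]
  piecewiseC2 := by
    obtain ⟨F, hF⟩ := hp.exists_hasDerivAt_unitTangent
    refine ⟨F ∪ {0, arcLength p 1}, fun t ht htF => ?_⟩
    simp only [Finset.mem_union, Finset.mem_insert, Finset.mem_singleton, not_or] at htF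
    obtain ⟨htF, ht_zero, ht_end⟩ := htF
    obtain ⟨d, hd, hle⟩ := hF t ⟨lt_of_le_of_ne' ht.1 ht_zero, lt_of_le_of_ne ht.2 ht_end⟩ htF
    exact ⟨d, hd.hasDerivWithinAt.congr_of_mem
      (fun r hr => hp.isRegularVelocity.derivWithin_arcLengthCurve x hr) ht, hle⟩

namespace SigmaSpace

variable {x y : E3}

/-- The length, curve and tangent of an arc, rescaled over `[0, 1]`: the data inducing the `C¹`
topology. -/
def c1Data (q : SigmaSpace x y) : ℝ × UniformFun I E3 × UniformFun I E3 :=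
  (q.1.1, UniformFun.ofFun fun t => q.1.2 (t * q.1.1),
    UniformFun.ofFun fun t => derivWithin q.1.2 (Icc 0 q.1.1) (t * q.1.1))

theorem isInducing_c1Data : IsInducing (c1Data : SigmaSpace x y → _) := ⟨rfl⟩

/-- The arc from `x` to `y` obtained by reparametrizing by arc length the curve with velocity
`p`. -/
def ofVelocity {p : ℝ → E3} (hp : IsVelocity (y - x) p) : SigmaSpace x y :=
  ⟨(arcLength p 1, arcLengthCurve x p), hp.isOneConstrained_arcLengthCurve x,
    by simp only [arcLengthCurve, intervalIntegral.integral_same, add_zero],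
    by simp only [hp.isRegularVelocity.arcLengthCurve_arcLength_one, hp.integral_eq,
      add_sub_cancel]⟩

theorem ofVelocity_congr {p q : ℝ → E3} (hp : IsVelocity (y - x) p) (hq : IsVelocity (y - x) q)
    (hpq : EqOn p q (Icc 0 1)) : ofVelocity hp = ofVelocity hq :=
  Subtype.ext <| Prod.ext (arcLength_congr hpq (right_mem_Icc.2 zero_le_one))
    (arcLengthCurve_congr x hpq)

theorem c1Data_ofVelocity {p : ℝ → E3} (hp : IsVelocity (y - x) p) :
    c1Data (ofVelocity hp) = (arcLength p 1,
      UniformFun.ofFun fun t : I => arcLengthCurve x p (t * arcLength p 1),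
      UniformFun.ofFun fun t : I => unitTangent p (t * arcLength p 1)) := by
  have hpos := hp.isRegularVelocity.arcLength_one_pos.le
  refine Prod.ext rfl (Prod.ext rfl (congrArg UniformFun.ofFun (funext fun t => ?_)))
  exact hp.isRegularVelocity.derivWithin_arcLengthCurve x
    ⟨mul_nonneg t.2.1 hpos, mul_le_of_le_one_left hpos t.2.2⟩

theorem continuous_ofVelocity {K : Type*} [TopologicalSpace K] [CompactSpace K] [T2Space K]
    {P : K → ℝ → E3} (hcont : Continuous (Function.uncurry P))
    (hP : ∀ k, IsVelocity (y - x) (P k)) : Continuous fun k => ofVelocity (hP k) := by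
  have hreg (k : K) : IsRegularVelocity (P k) := (hP k).isRegularVelocity
  have hlength : Continuous fun k => arcLength (P k) 1 :=
    IsRegularVelocity.continuous_arcLength_one_family hcont
  let scale (z : K × I) : K × ℝ := (z.1, z.2 * arcLength (P z.1) 1)
  have hscale : Continuous scale :=
    continuous_fst.prodMk
      ((continuous_subtype_val.comp continuous_snd).mul (hlength.comp continuous_fst))
  have hcurve : Continuous fun z : K × I =>
      arcLengthCurve x (P z.1) (z.2 * arcLength (P z.1) 1) :=
    (IsRegularVelocity.continuous_arcLengthCurve_family x hcont hreg).comp (f := scale) hscale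
  have htangent : Continuous fun z : K × I => unitTangent (P z.1) (z.2 * arcLength (P z.1) 1) :=
    (IsRegularVelocity.continuous_unitTangent_family hcont hreg).comp (f := scale) hscale
  rw [isInducing_c1Data.continuous_iff]
  simp only [Function.comp_def, c1Data_ofVelocity]
  exact hlength.prodMk <| (continuous_uniformFun_ofFun
      (f := fun k (t : I) => arcLengthCurve x (P k) (t * arcLength (P k) 1)) hcurve).prodMk <|
    continuous_uniformFun_ofFun
      (f := fun k (t : I) => unitTangent (P k) (t * arcLength (P k) 1)) htangent

theorem joined_ofVelocity {p q : ℝ → E3} (hp : IsVelocity (y - x) p) (hq : IsVelocity (y - x) q)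
    (hpq : VelocityHomotopic (y - x) p q) : Joined (ofVelocity hp) (ofVelocity hq) := by
  obtain ⟨P, hcont, hP, hP_zero, hP_one⟩ := hpq
  rw [← ofVelocity_congr (hP 0) hp hP_zero, ← ofVelocity_congr (hP 1) hq hP_one]
  exact ⟨⟨⟨fun k => ofVelocity (hP k), continuous_ofVelocity hcont hP⟩, rfl, rfl⟩⟩

end SigmaSpace

section UnitTangentField

variable {E : Type*} [NormedAddCommGroup E] [NormedSpace ℝ E]

/-- `u` extends to `ℝ` the unit tangent of an arc-length parametrized curve over `[0, s]` of
curvature at most one. -/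
structure IsUnitTangent (s : ℝ) (u : ℝ → E) : Prop where
  pos : 0 < s
  norm_eq_one : ∀ t, ‖u t‖ = 1
  lipschitzWith : LipschitzWith 1 u
  isConstrainedOn : IsConstrainedOn u 0 s

namespace IsUnitTangent

variable {s : ℝ} {u : ℝ → E} {v : E}

theorem continuous (hu : IsUnitTangent s u) : Continuous u := hu.lipschitzWith.continuous

theorem isVelocity (hu : IsUnitTangent s u) (hint : ∫ t in (0 : ℝ)..s, u t = v) :
    IsVelocity v (unitRescale u 0 s) :=
  hu.isConstrainedOn.isVelocity_unitRescale hu.continuous hu.pos hint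

theorem arcLength_unitRescale (hu : IsUnitTangent s u) (t : ℝ) :
    arcLength (unitRescale u 0 s) t = s * t := by
  have hnorm (r : ℝ) : ‖unitRescale u 0 s r‖ = s := by
    rw [unitRescale, norm_smul, hu.norm_eq_one, sub_zero, Real.norm_of_nonneg hu.pos.le, mul_one]
  simp only [arcLength, hnorm, intervalIntegral.integral_const, sub_zero, smul_eq_mul, mul_comm]

end IsUnitTangent

end UnitTangentField

theorem IsUnitTangent.unitTangent_unitRescale {E : Type*} [NormedAddCommGroup E]
    [InnerProductSpace ℝ E] {s : ℝ} {u : ℝ → E} (hu : IsUnitTangent s u) {z : ℝ}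
    (hz : z ∈ Icc 0 s) : unitTangent (unitRescale u 0 s) z = u z := by
  have hs := hu.pos
  have hlength := (hu.isVelocity rfl).isRegularVelocity.arcLength_timeAtLength (z := z)
    (by rwa [hu.arcLength_unitRescale, mul_one])
  rw [hu.arcLength_unitRescale] at hlength
  rw [unitTangent, unitRescale, sub_zero, zero_add, hlength, NormedSpace.normalize_smul_of_pos hs,
    NormedSpace.normalize_eq_self_of_norm_eq_one (hu.norm_eq_one z)]

namespace IsOneConstrained

variable {s : ℝ} {γ : ℝ → E3}

/-- The unit tangent of `γ`, extended constantly outside `[0, s]`. -/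
def tangent (hγ : IsOneConstrained s γ) : ℝ → E3 :=
  IccExtend hγ.s_pos.le ((Icc 0 s).domRestrict (derivWithin γ (Icc 0 s)))

theorem tangent_of_mem (hγ : IsOneConstrained s γ) {t : ℝ} (ht : t ∈ Icc 0 s) :
    hγ.tangent t = derivWithin γ (Icc 0 s) t :=
  IccExtend_of_mem _ _ ht

theorem continuousOn_derivWithin (hγ : IsOneConstrained s γ) :
    ContinuousOn (derivWithin γ (Icc 0 s)) (Icc 0 s) :=
  hγ.contDiff.continuousOn_derivWithin (uniqueDiffOn_Icc hγ.s_pos) le_rfl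

theorem exists_hasDerivAt_derivWithin (hγ : IsOneConstrained s γ) :
    ∃ F : Finset ℝ, ∀ t ∈ Ioo 0 s, t ∉ F →
      ∃ d : E3, HasDerivAt (derivWithin γ (Icc 0 s)) d t ∧ ‖d‖ ≤ 1 := by
  obtain ⟨F, hF⟩ := hγ.piecewiseC2
  refine ⟨F, fun t ht htF => ?_⟩
  obtain ⟨d, hd, hle⟩ := hF t (Ioo_subset_Icc_self ht) htF
  exact ⟨d, hd.hasDerivAt (Icc_mem_nhds ht.1 ht.2), hle⟩

theorem lipschitzOnWith_derivWithin (hγ : IsOneConstrained s γ) :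
    LipschitzOnWith 1 (derivWithin γ (Icc 0 s)) (Icc 0 s) := by
  obtain ⟨F, hF⟩ := hγ.exists_hasDerivAt_derivWithin
  refine LipschitzOnWith.of_dist_le_mul fun a ha b hb => ?_
  wlog hab : a ≤ b generalizing a b
  · rw [dist_comm, dist_comm a b]
    exact this b hb a ha (le_of_not_ge hab)
  rw [dist_comm, dist_comm a b, dist_eq_norm, Real.dist_eq, abs_of_nonneg (sub_nonneg.2 hab),
    NNReal.coe_one]
  exact norm_sub_le_of_norm_deriv_le_off_countable F.countable_toSet hab
    (hγ.continuousOn_derivWithin.mono (Icc_subset_Icc ha.1 hb.2))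
    fun t ht => hF t (Ioo_subset_Ioo ha.1 hb.2 ht.1) ht.2

theorem isUnitTangent_tangent (hγ : IsOneConstrained s γ) : IsUnitTangent s hγ.tangent where
  pos := hγ.s_pos
  norm_eq_one t := hγ.unitSpeed _ (projIcc 0 s hγ.s_pos.le t).2
  lipschitzWith := by
    have hrestrict := lipschitzOnWith_iff_restrict.1 hγ.lipschitzOnWith_derivWithin
    exact mul_one (1 : NNReal) ▸ hrestrict.comp (LipschitzWith.projIcc hγ.s_pos.le)
  isConstrainedOn := by
    refine IsConstrainedOn.congr ⟨fun t ht => ?_, ?_⟩ fun t ht => (hγ.tangent_of_mem ht).symm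
    · exact norm_ne_zero_iff.1 (by rw [hγ.unitSpeed t ht]; exact one_ne_zero)
    · obtain ⟨F, hF⟩ := hγ.exists_hasDerivAt_derivWithin
      refine ⟨F, fun t ht htF => ?_⟩
      rw [hγ.unitSpeed t (Ioo_subset_Icc_self ht), one_pow]
      exact hF t ht htF

theorem apply_sub_apply_eq_integral_tangent (hγ : IsOneConstrained s γ) {a b : ℝ} (ha : 0 ≤ a)
    (hab : a ≤ b) (hb : b ≤ s) : γ b - γ a = ∫ r in a..b, hγ.tangent r := by
  refine (intervalIntegral.integral_eq_sub_of_hasDerivAt_of_le hab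
    (hγ.contDiff.continuousOn.mono (Icc_subset_Icc ha hb)) (fun r hr => ?_)
    (hγ.isUnitTangent_tangent.continuous.intervalIntegrable _ _)).symm
  have hr' : r ∈ Ioo 0 s := Ioo_subset_Ioo ha hb hr
  rw [hγ.tangent_of_mem (Ioo_subset_Icc_self hr')]
  exact (hγ.contDiff.differentiableOn one_ne_zero r
    (Ioo_subset_Icc_self hr')).hasDerivWithinAt.hasDerivAt (Icc_mem_nhds hr'.1 hr'.2)

end IsOneConstrained

namespace SigmaSpace

variable {x y : E3}

/-- The unit tangent of an arc, extended constantly outside its domain. -/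
def tangent (q : SigmaSpace x y) : ℝ → E3 := q.2.1.tangent

/-- The length of an arc. -/
def length (q : SigmaSpace x y) : ℝ := q.1.1

theorem isUnitTangent_tangent (q : SigmaSpace x y) : IsUnitTangent q.length q.tangent :=
  q.2.1.isUnitTangent_tangent

theorem integral_tangent (q : SigmaSpace x y) :
    ∫ t in (0 : ℝ)..q.length, q.tangent t = y - x := by
  rw [tangent, length, ← q.2.1.apply_sub_apply_eq_integral_tangent le_rfl q.2.1.s_pos.le le_rfl,
    q.2.2.1, q.2.2.2]

theorem isVelocity_tangent (q : SigmaSpace x y) :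
    IsVelocity (y - x) (unitRescale q.tangent 0 q.length) :=
  q.isUnitTangent_tangent.isVelocity q.integral_tangent

theorem inseparable_of_eqOn {q q' : SigmaSpace x y} (hlength : q.length = q'.length)
    (hcurve : EqOn q.1.2 q'.1.2 (Icc 0 q.length)) : Inseparable q q' := by
  have hscale (t : I) : (t : ℝ) * q.1.1 ∈ Icc 0 q.1.1 :=
    ⟨mul_nonneg t.2.1 q.2.1.s_pos.le, mul_le_of_le_one_left q.2.1.s_pos.le t.2.2⟩
  refine isInducing_c1Data.inseparable_iff.1 (.of_eq ?_)
  refine Prod.ext hlength (Prod.ext ?_ ?_)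
  · refine congrArg UniformFun.ofFun (funext fun t => ?_)
    rw [← show q.1.1 = q'.1.1 from hlength]
    exact hcurve (hscale t)
  · refine congrArg UniformFun.ofFun (funext fun t => ?_)
    rw [← show q.1.1 = q'.1.1 from hlength]
    exact derivWithin_congr hcurve (hcurve (hscale t))

theorem joined_ofVelocity_tangent (q : SigmaSpace x y) :
    Joined q (ofVelocity q.isVelocity_tangent) := by
  have hu := q.isUnitTangent_tangent
  have hlength : q.length = (ofVelocity q.isVelocity_tangent).length :=
    (mul_one q.length).symm.trans (hu.arcLength_unitRescale 1).symm
  have hcurve : EqOn q.1.2 (ofVelocity q.isVelocity_tangent).1.2 (Icc 0 q.length) := by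
    intro z hz
    have htangent : ∫ r in (0 : ℝ)..z, unitTangent (unitRescale q.tangent 0 q.length) r =
        ∫ r in (0 : ℝ)..z, q.tangent r := intervalIntegral.integral_congr fun r hr => by
      rw [uIcc_of_le hz.1] at hr
      exact hu.unitTangent_unitRescale ⟨hr.1, hr.2.trans hz.2⟩
    have hdisplacement := q.2.1.apply_sub_apply_eq_integral_tangent le_rfl hz.1 hz.2
    simp only [ofVelocity, arcLengthCurve, htangent]
    rw [tangent, ← hdisplacement, q.2.2.1, add_sub_cancel]
  exact (inseparable_of_eqOn hlength hcurve |>.joinedIn (mem_univ _) (mem_univ _)).joined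

theorem joined_of_velocityHomotopic {q : SigmaSpace x y} {p : ℝ → E3}
    (hp : IsVelocity (y - x) p)
    (hqp : VelocityHomotopic (y - x) (unitRescale q.tangent 0 q.length) p) :
    Joined q (ofVelocity hp) :=
  q.joined_ofVelocity_tangent.trans (joined_ofVelocity q.isVelocity_tangent hp hqp)

theorem continuous_length : Continuous (length : SigmaSpace x y → ℝ) :=
  (isInducing_c1Data (x := x) (y := y)).continuous.fst

end SigmaSpace

/-! ### Contracting short arcs to the segment -/

section RotateOnto

variable {E : Type*} [NormedAddCommGroup E] [InnerProductSpace ℝ E]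

/-- The composite of the reflections in the lines spanned by `e + a` and `e`. For unit vectors it
is a rotation carrying `a` to `e`, depending continuously on `a` away from `-e`. -/
def rotateOnto (e a : E) : E ≃ₗᵢ[ℝ] E := (ℝ ∙ (e + a)).reflection.trans (ℝ ∙ e).reflection

theorem rotateOnto_apply (e a z : E) :
    rotateOnto e a z = (ℝ ∙ e).reflection ((ℝ ∙ (e + a)).reflection z) := rfl

theorem rotateOnto_apply_of_norm_eq {e a : E} (h : ‖a‖ = ‖e‖) : rotateOnto e a a = e := by
  have hbisector : (ℝ ∙ (e + a)).reflection a = e := by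
    have := Submodule.reflection_sub (v := a) (w := -e) (by rwa [norm_neg])
    rwa [sub_neg_eq_add, add_comm, Submodule.reflection_orthogonal_apply, neg_inj] at this
  rw [rotateOnto_apply, hbisector,
    Submodule.reflection_mem_subspace_eq_self (Submodule.mem_span_singleton_self e)]

theorem rotateOnto_self (e z : E) : rotateOnto e e z = z := by
  have hspan : (ℝ ∙ (e + e)) = ℝ ∙ e := by
    rw [← two_smul ℝ e, Submodule.span_singleton_smul_eq (isUnit_iff_ne_zero.2 two_ne_zero)]
  simp only [rotateOnto_apply, hspan, Submodule.reflection_reflection]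

theorem continuous_rotateOnto {K : Type*} [TopologicalSpace K] {e : E} {a z : K → E}
    (ha : Continuous a) (hz : Continuous z) (hne : ∀ k, e + a k ≠ 0) :
    Continuous fun k => rotateOnto e (a k) (z k) := by
  have hnorm (k : K) : ‖e + a k‖ ^ 2 ≠ 0 := pow_ne_zero 2 (norm_ne_zero_iff.2 (hne k))
  simp only [rotateOnto_apply, Submodule.reflection_singleton_apply (e + a _),
    RCLike.ofReal_real_eq_id, id_eq]
  have hprojection : Continuous fun k => (⟪e + a k, z k⟫_ℝ / ‖e + a k‖ ^ 2) • (e + a k) :=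
    Continuous.smul (Continuous.div (by fun_prop) (by fun_prop) hnorm) (by fun_prop)
  exact (ℝ ∙ e).reflection.continuous.comp ((hprojection.const_smul 2).sub hz)

theorem normalize_add_normalize_ne_zero {v w : E} (h : 0 < ⟪v, w⟫_ℝ) :
    NormedSpace.normalize v + NormedSpace.normalize w ≠ 0 := by
  have hv : v ≠ 0 := fun h0 => by simp [h0] at h
  have hw : w ≠ 0 := fun h0 => by simp [h0] at h
  have hinner : 0 < ⟪NormedSpace.normalize v, NormedSpace.normalize w⟫_ℝ := by
    simp only [NormedSpace.normalize, real_inner_smul_left, real_inner_smul_right]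
    have := norm_pos_iff.2 hv
    have := norm_pos_iff.2 hw
    positivity
  intro h0
  rw [eq_neg_of_add_eq_zero_left h0, inner_neg_left] at hinner
  linarith [real_inner_self_nonneg (x := NormedSpace.normalize w)]

end RotateOnto

section Contraction

variable {E : Type*} [NormedAddCommGroup E] [InnerProductSpace ℝ E]

/-- The mean of `u` over `[0, r]`, which is `u 0` when `r = 0`. -/
def initialMean (u : ℝ → E) (r : ℝ) : E := ∫ t in (0 : ℝ)..1, u (r * t)

theorem smul_initialMean (u : ℝ → E) (r : ℝ) : r • initialMean u r = ∫ t in (0 : ℝ)..r, u t := by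
  rw [initialMean, intervalIntegral.smul_integral_comp_mul_left u, mul_zero, mul_one]

theorem continuous_initialMean {u : ℝ → E} (hu : Continuous u) : Continuous (initialMean u) :=
  intervalIntegral.continuous_parametric_intervalIntegral_of_continuous'
    (f := fun r t => u (r * t)) (by fun_prop) 0 1

/-- The velocity over `[0, 1]` of the initial subarc of length `r` of a curve with velocity `u`,
rotated and dilated so that its total displacement becomes `v`. -/
def contractedVelocity (v : E) (u : ℝ → E) (r t : ℝ) : E :=
  (‖v‖ / ‖initialMean u r‖) •
    rotateOnto (NormedSpace.normalize v) (NormedSpace.normalize (initialMean u r)) (u (r * t))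

theorem smul_rotateOnto_normalize {v w : E} (hv : v ≠ 0) (hw : w ≠ 0) :
    (‖v‖ / ‖w‖) • rotateOnto (NormedSpace.normalize v) (NormedSpace.normalize w) w = v := by
  have hnorm : ‖NormedSpace.normalize w‖ = ‖NormedSpace.normalize v‖ := by
    rw [NormedSpace.norm_normalize hv, NormedSpace.norm_normalize hw]
  conv_lhs => enter [2, 2]; rw [← NormedSpace.norm_smul_normalize w]
  rw [map_smul, rotateOnto_apply_of_norm_eq hnorm, smul_smul,
    div_mul_cancel₀ _ (norm_ne_zero_iff.2 hw), NormedSpace.norm_smul_normalize]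

theorem contractedVelocity_zero [CompleteSpace E] {v : E} {u : ℝ → E} (hv : v ≠ 0)
    (hu : u 0 ≠ 0) (t : ℝ) : contractedVelocity v u 0 t = v := by
  have hmean : initialMean u 0 = u 0 := by
    simp only [initialMean, zero_mul, intervalIntegral.integral_const, sub_zero, one_smul]
  rw [contractedVelocity, hmean, zero_mul, smul_rotateOnto_normalize hv hu]

theorem contractedVelocity_eq_unitRescale {v : E} {u : ℝ → E} {s : ℝ} (hs : 0 < s) (hv : v ≠ 0)
    (hint : ∫ t in (0 : ℝ)..s, u t = v) (t : ℝ) :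
    contractedVelocity v u s t = unitRescale u 0 s t := by
  have hmean : initialMean u s = s⁻¹ • v := by
    rw [← hint, ← smul_initialMean, smul_smul, inv_mul_cancel₀ hs.ne', one_smul]
  have hv' : ‖v‖ ≠ 0 := norm_ne_zero_iff.2 hv
  rw [contractedVelocity, hmean, NormedSpace.normalize_smul_of_pos (inv_pos.2 hs),
    rotateOnto_self, norm_smul, norm_inv, Real.norm_of_nonneg hs.le, unitRescale, sub_zero,
    zero_add]
  congr 1
  field_simp

theorem continuous_contractedVelocity {K : Type*} [TopologicalSpace K] {v : E} {u : ℝ → E}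
    {r : K → ℝ} (hu : Continuous u) (hr : Continuous r)
    (hpos : ∀ k, 0 < ⟪v, initialMean u (r k)⟫_ℝ) :
    Continuous fun z : K × ℝ => contractedVelocity v u (r z.1) z.2 := by
  have hne (k : K) : initialMean u (r k) ≠ 0 := fun h0 => by simpa [h0] using hpos k
  have hmean : Continuous fun z : K × ℝ => initialMean u (r z.1) :=
    (continuous_initialMean hu).comp (hr.comp continuous_fst)
  have hnormalize : Continuous fun z : K × ℝ => NormedSpace.normalize (initialMean u (r z.1)) :=
    (hmean.norm.inv₀ fun z => norm_ne_zero_iff.2 (hne z.1)).smul hmean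
  exact (continuous_const.div hmean.norm fun z => norm_ne_zero_iff.2 (hne z.1)).smul
    (continuous_rotateOnto hnormalize (by fun_prop)
      fun z => normalize_add_normalize_ne_zero (hpos z.1))

theorem integral_contractedVelocity [CompleteSpace E] {v : E} {u : ℝ → E} {r : ℝ}
    (hu : Continuous u) (hv : v ≠ 0) (hmean : initialMean u r ≠ 0) :
    ∫ t in (0 : ℝ)..1, contractedVelocity v u r t = v := by
  have hcomm := (rotateOnto (NormedSpace.normalize v) (NormedSpace.normalize (initialMean u r))
    ).toContinuousLinearEquiv.toContinuousLinearMap.intervalIntegral_comp_comm (μ := volume)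
      (Continuous.intervalIntegrable (u := fun t => u (r * t)) (by fun_prop) 0 1)
  simp only [contractedVelocity, intervalIntegral.integral_smul]
  exact (congrArg _ hcomm).trans (smul_rotateOnto_normalize hv hmean)

theorem contractedVelocity_eq_smul_unitRescale {v : E} {u : ℝ → E} {r : ℝ} (hr : 0 < r) (t : ℝ) :
    contractedVelocity v u r t = (‖v‖ / ‖∫ t in (0 : ℝ)..r, u t‖) •
      rotateOnto (NormedSpace.normalize v) (NormedSpace.normalize (initialMean u r))
        (unitRescale u 0 r t) := by
  rw [unitRescale, sub_zero, zero_add, map_smul, smul_smul, ← smul_initialMean, norm_smul,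
    Real.norm_of_nonneg hr.le, contractedVelocity]
  congr 1
  field_simp

namespace IsUnitTangent

variable [CompleteSpace E] {s : ℝ} {u : ℝ → E} {t r : ℝ}

theorem inner_integral_pos (hu : IsUnitTangent s u) (hs : s < π) (ht : t ∈ Icc 0 s) :
    0 < ⟪∫ t in (0 : ℝ)..s, u t, u t⟫_ℝ := by
  have hle := sin_add_sin_le_inner_integral hu.norm_eq_one hu.lipschitzWith ht.1 ht.2 (by linarith)
  have hfirst : 0 ≤ Real.sin (t - 0) :=
    Real.sin_nonneg_of_nonneg_of_le_pi (by linarith [ht.1]) (by linarith [ht.2])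
  have hsecond : 0 ≤ Real.sin (s - t) :=
    Real.sin_nonneg_of_nonneg_of_le_pi (by linarith [ht.2]) (by linarith [ht.1])
  rw [real_inner_comm]
  rcases ht.1.eq_or_lt with rfl | hpos
  · linarith [Real.sin_pos_of_pos_of_lt_pi (x := s - 0) (by linarith [hu.pos]) (by linarith)]
  · linarith [Real.sin_pos_of_pos_of_lt_pi (x := t - 0) (by linarith) (by linarith [ht.2])]

theorem monotoneOn_norm_integral (hu : IsUnitTangent s u) :
    MonotoneOn (fun r => ‖∫ t in (0 : ℝ)..r, u t‖) (Icc 0 π) := by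
  have hderiv (r : ℝ) : HasDerivAt (fun r => ‖∫ t in (0 : ℝ)..r, u t‖ ^ 2)
      (2 * ⟪∫ t in (0 : ℝ)..r, u t, u r⟫_ℝ) r :=
    (hu.continuous.integral_hasStrictDerivAt 0 r).hasDerivAt.norm_sq
  have hsq : MonotoneOn (fun r => ‖∫ t in (0 : ℝ)..r, u t‖ ^ 2) (Icc 0 π) := by
    refine monotoneOn_of_deriv_nonneg (convex_Icc _ _)
      (fun r _ => (hderiv r).continuousAt.continuousWithinAt)
      (fun r _ => (hderiv r).differentiableAt.differentiableWithinAt) fun r hr => ?_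
    rw [interior_Icc] at hr
    have hle := sin_add_sin_le_inner_integral hu.norm_eq_one hu.lipschitzWith hr.1.le le_rfl
      (by linarith [hr.2])
    have hsin := Real.sin_pos_of_mem_Ioo hr
    rw [sub_zero, sub_self, Real.sin_zero, add_zero, real_inner_comm] at hle
    rw [(hderiv r).deriv]
    linarith
  exact fun a ha b hb hab => (sq_le_sq₀ (norm_nonneg _) (norm_nonneg _)).1 (hsq ha hb hab)

theorem inner_integral_initialMean_pos (hu : IsUnitTangent s u) (hs : s < π) (hr : r ∈ Icc 0 s) :
    0 < ⟪∫ t in (0 : ℝ)..s, u t, initialMean u r⟫_ℝ := by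
  have hcont : Continuous fun t => u (r * t) := hu.continuous.comp (by fun_prop)
  rw [initialMean, inner_intervalIntegral hcont]
  refine intervalIntegral.intervalIntegral_pos_of_pos_on
    ((continuous_const.inner hcont).intervalIntegrable _ _) (fun t ht => ?_) zero_lt_one
  exact hu.inner_integral_pos hs
    ⟨mul_nonneg hr.1 ht.1.le, (mul_le_of_le_one_right hr.1 ht.2.le).trans hr.2⟩

theorem isConstrainedOn_contractedVelocity (hu : IsUnitTangent s u) (hs : s < π)
    (hr : r ∈ Icc 0 s) : IsConstrainedOn (contractedVelocity (∫ t in (0 : ℝ)..s, u t) u r) 0 1 := by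
  have hmean := hu.inner_integral_initialMean_pos hs hr
  have hv : (∫ t in (0 : ℝ)..s, u t) ≠ 0 := fun h0 => by simp [h0] at hmean
  rcases hr.1.eq_or_lt with rfl | hpos
  · refine (IsConstrainedOn.const hv).congr fun t _ => (contractedVelocity_zero hv ?_ t).symm
    exact norm_ne_zero_iff.1 (by rw [hu.norm_eq_one]; exact one_ne_zero)
  have hchord : 0 < ‖∫ t in (0 : ℝ)..r, u t‖ := by
    rw [← smul_initialMean]
    exact norm_pos_iff.2 (smul_ne_zero hpos.ne' fun h0 => by simp [h0] at hmean)
  have hratio : 1 ≤ ‖∫ t in (0 : ℝ)..s, u t‖ / ‖∫ t in (0 : ℝ)..r, u t‖ := (one_le_div hchord).2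
    (hu.monotoneOn_norm_integral ⟨hr.1, by linarith [hr.2]⟩ ⟨hu.pos.le, hs.le⟩ hr.2)
  have hsubarc : IsConstrainedOn (unitRescale u 0 r) 0 1 :=
    ((hu.isConstrainedOn.mono le_rfl hr.2).isVelocity_unitRescale hu.continuous hpos
      rfl).isConstrainedOn
  exact ((hsubarc.linearIsometry_comp (rotateOnto _ _).toLinearIsometry).const_smul hratio).congr
    fun t _ => (contractedVelocity_eq_smul_unitRescale hpos t).symm

theorem isVelocity_contractedVelocity (hu : IsUnitTangent s u) (hs : s < π) (hr : r ∈ Icc 0 s) :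
    IsVelocity (∫ t in (0 : ℝ)..s, u t) (contractedVelocity (∫ t in (0 : ℝ)..s, u t) u r) := by
  have hmean := hu.inner_integral_initialMean_pos hs hr
  refine ⟨?_, hu.isConstrainedOn_contractedVelocity hs hr,
    integral_contractedVelocity hu.continuous (fun h0 => by simp [h0] at hmean)
      (fun h0 => by simp [h0] at hmean)⟩
  exact (continuous_contractedVelocity (K := Unit) (r := fun _ => r) hu.continuous
    continuous_const fun _ => hmean).comp (f := fun t => ((), t)) (by fun_prop)

theorem velocityHomotopic_const {v : E} (hu : IsUnitTangent s u) (hs : s < π)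
    (hint : ∫ t in (0 : ℝ)..s, u t = v) : VelocityHomotopic v (unitRescale u 0 s) fun _ => v := by
  subst hint
  let r (k : I) : ℝ := (1 - k) * s
  have hr (k : I) : r k ∈ Icc 0 s :=
    ⟨mul_nonneg (unitInterval.one_minus_nonneg k) hu.pos.le,
      mul_le_of_le_one_left hu.pos.le (unitInterval.one_minus_le_one k)⟩
  have hmean (k : I) := hu.inner_integral_initialMean_pos hs (hr k)
  have hv : (∫ t in (0 : ℝ)..s, u t) ≠ 0 := fun h0 => by simpa [h0] using hmean 0
  refine ⟨fun k => contractedVelocity (∫ t in (0 : ℝ)..s, u t) u (r k),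
    continuous_contractedVelocity hu.continuous (by fun_prop) hmean,
    fun k => hu.isVelocity_contractedVelocity hs (hr k), fun t _ => ?_, fun t _ => ?_⟩
  · simp only [r, Icc.coe_zero, sub_zero, one_mul]
    exact contractedVelocity_eq_unitRescale hu.pos hv rfl t
  · simp only [r, Icc.coe_one, sub_self, zero_mul]
    exact contractedVelocity_zero hv
      (norm_ne_zero_iff.1 (by rw [hu.norm_eq_one]; exact one_ne_zero)) t

end IsUnitTangent

end Contraction

namespace SigmaSpace

variable {x y : E3}

theorem strictMonoOn_inner_of_length_lt_pi {q : SigmaSpace x y} (hq : q.length < π) :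
    StrictMonoOn (fun t => ⟪y - x, q.1.2 t⟫_ℝ) (Icc 0 q.length) := by
  intro a ha b hb hab
  have hu := q.isUnitTangent_tangent
  rw [← sub_pos, ← inner_sub_right,
    q.2.1.apply_sub_apply_eq_integral_tangent ha.1 hab.le hb.2,
    inner_intervalIntegral q.2.1.isUnitTangent_tangent.continuous]
  refine intervalIntegral.intervalIntegral_pos_of_pos_on
    ((continuous_const.inner hu.continuous).intervalIntegrable _ _) (fun t ht => ?_) hab
  have := hu.inner_integral_pos hq (t := t) ⟨by linarith [ha.1, ht.1], by linarith [ht.2, hb.2]⟩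
  rwa [q.integral_tangent] at this

theorem injOn_of_length_lt_pi {q : SigmaSpace x y} (hq : q.length < π) :
    InjOn q.1.2 (Icc 0 q.length) :=
  (strictMonoOn_inner_of_length_lt_pi hq).injOn.of_comp (g := fun z => ⟪y - x, z⟫_ℝ)

end SigmaSpace

/-! ### Drifting circles -/

theorem sin_nat_mul_two_pi (m : ℕ) : Real.sin (m * (2 * π)) = 0 :=
  (Real.sin_periodic.nat_mul_eq m).trans Real.sin_zero

section OrthonormalPair

variable {E : Type*} [NormedAddCommGroup E] [InnerProductSpace ℝ E]

/-- `w` and `n` are orthogonal unit vectors, to be thought of as an oriented plane with a base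
direction `w`. -/
structure IsOrthonormalPair (w n : E) : Prop where
  norm_left : ‖w‖ = 1
  norm_right : ‖n‖ = 1
  inner_eq_zero : ⟪w, n⟫_ℝ = 0

namespace IsOrthonormalPair

variable {w n : E}

theorem symm (h : IsOrthonormalPair w n) : IsOrthonormalPair n w :=
  ⟨h.norm_right, h.norm_left, by rw [real_inner_comm, h.inner_eq_zero]⟩

theorem inner_left_self (h : IsOrthonormalPair w n) : ⟪w, w⟫_ℝ = 1 := by
  rw [real_inner_self_eq_norm_sq, h.norm_left, one_pow]

theorem norm_sq_smul_add_smul (h : IsOrthonormalPair w n) (a b : ℝ) :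
    ‖a • w + b • n‖ ^ 2 = a ^ 2 + b ^ 2 := by
  rw [norm_add_sq_real, norm_smul, norm_smul, real_inner_smul_left, real_inner_smul_right,
    h.inner_eq_zero, h.norm_left, h.norm_right]
  simp

theorem norm_cos_smul_add_sin_smul (h : IsOrthonormalPair w n) (θ : ℝ) :
    ‖Real.cos θ • w + Real.sin θ • n‖ = 1 := by
  rw [← sq_eq_sq₀ (norm_nonneg _) zero_le_one, h.norm_sq_smul_add_smul, Real.cos_sq_add_sin_sq,
    one_pow]

end IsOrthonormalPair

/-- The rotation by the angle `φ` in the plane of an orthonormal pair `w`, `n`, carrying `w` towards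
`n` and fixing the orthogonal complement of the plane. -/
def planeRotation (w n : E) (φ : ℝ) : E →ₗ[ℝ] E :=
  LinearMap.id +
    (innerₗ E w).smulRight ((Real.cos φ - 1) • w + Real.sin φ • n) +
    (innerₗ E n).smulRight ((-Real.sin φ) • w + (Real.cos φ - 1) • n)

theorem planeRotation_apply (w n : E) (φ : ℝ) (z : E) : planeRotation w n φ z =
    z + ⟪w, z⟫_ℝ • ((Real.cos φ - 1) • w + Real.sin φ • n) +
      ⟪n, z⟫_ℝ • ((-Real.sin φ) • w + (Real.cos φ - 1) • n) := rfl

theorem planeRotation_nat_mul_two_pi (w n z : E) (m : ℕ) :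
    planeRotation w n (m * (2 * π)) z = z := by
  rw [planeRotation_apply, Real.cos_nat_mul_two_pi, sin_nat_mul_two_pi]
  simp

namespace IsOrthonormalPair

variable {w n : E}

theorem planeRotation_left (h : IsOrthonormalPair w n) (φ : ℝ) :
    planeRotation w n φ w = Real.cos φ • w + Real.sin φ • n := by
  rw [planeRotation_apply, h.inner_left_self, h.symm.inner_eq_zero]
  module

theorem planeRotation_right (h : IsOrthonormalPair w n) (φ : ℝ) :
    planeRotation w n φ n = (-Real.sin φ) • w + Real.cos φ • n := by
  rw [planeRotation_apply, h.symm.inner_left_self, h.inner_eq_zero]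
  module

theorem norm_planeRotation (h : IsOrthonormalPair w n) (φ : ℝ) (z : E) :
    ‖planeRotation w n φ z‖ = ‖z‖ := by
  set α := ⟪w, z⟫_ℝ with hα
  set β := ⟪n, z⟫_ℝ with hβ
  set z' := z - α • w - β • n with hz'
  have hwz' : ⟪z', w⟫_ℝ = 0 := by
    rw [real_inner_comm, hz', inner_sub_right, inner_sub_right, real_inner_smul_right,
      real_inner_smul_right, h.inner_left_self, h.inner_eq_zero, ← hα]
    ring
  have hnz' : ⟪z', n⟫_ℝ = 0 := by
    rw [real_inner_comm, hz', inner_sub_right, inner_sub_right, real_inner_smul_right,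
      real_inner_smul_right, h.symm.inner_left_self, h.symm.inner_eq_zero, ← hβ]
    ring
  have pythagoras (a b : ℝ) : ‖z' + (a • w + b • n)‖ ^ 2 = ‖z'‖ ^ 2 + (a ^ 2 + b ^ 2) := by
    rw [norm_add_sq_real, h.norm_sq_smul_add_smul, inner_add_right, real_inner_smul_right,
      real_inner_smul_right, hwz', hnz']
    ring
  have hrotation : planeRotation w n φ z = z' + ((α * Real.cos φ - β * Real.sin φ) • w +
      (α * Real.sin φ + β * Real.cos φ) • n) := by
    rw [planeRotation_apply, ← hα, ← hβ, hz']
    module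
  have hz : z = z' + (α • w + β • n) := by
    rw [hz']
    module
  rw [← sq_eq_sq₀ (norm_nonneg _) (norm_nonneg _), hrotation, pythagoras, hz, pythagoras]
  linear_combination (α ^ 2 + β ^ 2) * Real.sin_sq_add_cos_sq φ

/-- `planeRotation` as a linear isometry. -/
def rotation (h : IsOrthonormalPair w n) (φ : ℝ) : E →ₗᵢ[ℝ] E :=
  ⟨planeRotation w n φ, h.norm_planeRotation φ⟩

theorem rotation_apply (h : IsOrthonormalPair w n) (φ : ℝ) (z : E) :
    h.rotation φ z = planeRotation w n φ z := rfl

end IsOrthonormalPair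

end OrthonormalPair

section DriftCircle

variable {E : Type*} [NormedAddCommGroup E] [InnerProductSpace ℝ E]

/-- A nonnegative bump of integral one over `[0, 2πmR]`, which is the time a unit speed circle of
radius `R` takes to close up `m` times. It vanishes at both ends. -/
def driftBump (R : ℝ) (m : ℕ) (r : ℝ) : ℝ :=
  (1 - Real.cos (r / (m * R))) / (m * (2 * π) * R)

/-- The velocity of a unit speed circle of radius `R` in the plane of `w`, `n`, to which a drift in
the direction of `D` is superimposed, of total displacement `D` after `m` turns. -/
def driftCircle (R : ℝ) (m : ℕ) (w n D : E) (r : ℝ) : E :=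
  Real.cos (r / R) • w + Real.sin (r / R) • n + driftBump R m r • D

variable {R : ℝ} {m : ℕ} {w n D : E}

theorem driftBump_zero : driftBump R m 0 = 0 := by
  rw [driftBump, zero_div, Real.cos_zero, sub_self, zero_div]

theorem driftBump_period (hR : R ≠ 0) (hm : m ≠ 0) : driftBump R m (m * (2 * π) * R) = 0 := by
  rw [driftBump, show m * (2 * π) * R / (m * R) = 2 * π by field_simp, Real.cos_two_pi, sub_self,
    zero_div]

theorem continuous_driftBump : Continuous (driftBump R m) := by
  unfold driftBump
  fun_prop

theorem integral_driftBump (hR : R ≠ 0) (hm : m ≠ 0) :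
    ∫ r in (0 : ℝ)..m * (2 * π) * R, driftBump R m r = 1 := by
  have hcos : IntervalIntegrable (fun r => Real.cos (r / (m * R))) volume 0 (m * (2 * π) * R) :=
    Continuous.intervalIntegrable (by fun_prop) _ _
  have hmR : (m : ℝ) * R ≠ 0 := mul_ne_zero (Nat.cast_ne_zero.2 hm) hR
  simp only [driftBump]
  rw [intervalIntegral.integral_div, intervalIntegral.integral_sub intervalIntegrable_const hcos,
    intervalIntegral.integral_comp_div (fun t => Real.cos t) hmR, integral_cos,
    show m * (2 * π) * R / (m * R) = 2 * π by field_simp, zero_div, Real.sin_two_pi, Real.sin_zero,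
    sub_self, smul_zero, sub_zero, intervalIntegral.integral_const, sub_zero, smul_eq_mul, mul_one,
    div_self (by positivity)]

theorem hasDerivAt_driftBump (r : ℝ) : HasDerivAt (driftBump R m)
    (Real.sin (r / (m * R)) * (1 / (m * R)) / (m * (2 * π) * R)) r := by
  have hangle : HasDerivAt (fun r => r / (m * R)) (1 / (m * R)) r :=
    (hasDerivAt_id r).div_const (m * R)
  have hderiv := (hangle.cos.const_sub 1).div_const (m * (2 * π) * R)
  rwa [neg_mul, neg_neg] at hderiv

theorem norm_driftBump_smul_le (hR : 2 ≤ R) (hm : m ≠ 0) (hD : 2 * ‖D‖ ≤ m) (r : ℝ) :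
    ‖driftBump R m r • D‖ ≤ 1 / 12 := by
  have : 0 < (m : ℝ) := by positivity
  have hbump : |driftBump R m r| ≤ 2 / (m * (2 * π) * R) := by
    rw [driftBump, abs_div, abs_of_pos (a := m * (2 * π) * R) (by positivity)]
    gcongr
    rw [abs_le]
    constructor <;>
      linarith [Real.neg_one_le_cos (r / (m * R)), Real.cos_le_one (r / (m * R))]
  rw [norm_smul, Real.norm_eq_abs]
  calc |driftBump R m r| * ‖D‖ ≤ 2 / (m * (2 * π) * R) * (m / 2) := by gcongr; linarith
    _ = 1 / (2 * (π * R)) := by field_simp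
    _ ≤ 1 / (2 * (3 * 2)) := by gcongr; exact Real.pi_gt_three.le
    _ = 1 / 12 := by norm_num

theorem norm_deriv_driftBump_smul_le (hR : 2 ≤ R) (hm : m ≠ 0) (hD : 2 * ‖D‖ ≤ m) (r : ℝ) :
    ‖deriv (driftBump R m) r • D‖ ≤ 1 / 12 := by
  have hm' : 1 ≤ (m : ℝ) := by exact_mod_cast Nat.one_le_iff_ne_zero.2 hm
  rw [(hasDerivAt_driftBump r).deriv, norm_smul, norm_div, norm_mul,
    Real.norm_of_nonneg (r := m * (2 * π) * R) (by positivity),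
    Real.norm_of_nonneg (r := 1 / (m * R)) (by positivity)]
  calc ‖Real.sin (r / (m * R))‖ * (1 / (m * R)) / (m * (2 * π) * R) * ‖D‖
      ≤ 1 * (1 / (m * R)) / (m * (2 * π) * R) * (m / 2) := by
        gcongr
        · exact Real.abs_sin_le_one _
        · linarith
    _ = 1 / (4 * (π * (m * (R * R)))) := by field_simp; ring
    _ ≤ 1 / (4 * (3 * (1 * (2 * 2)))) := by gcongr; exact Real.pi_gt_three.le
    _ ≤ 1 / 12 := by norm_num

theorem driftCircle_zero : driftCircle R m w n D 0 = w := by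
  rw [driftCircle, driftBump_zero, zero_div, Real.cos_zero, Real.sin_zero, one_smul, zero_smul,
    zero_smul, add_zero, add_zero]

theorem continuous_driftCircle {K : Type*} [TopologicalSpace K] {R r : K → ℝ} {w n D : K → E}
    (hR : Continuous R) (hR₀ : ∀ k, R k ≠ 0) (hm : m ≠ 0) (hr : Continuous r) (hw : Continuous w)
    (hn : Continuous n) (hD : Continuous D) :
    Continuous fun k => driftCircle (R k) m (w k) (n k) (D k) (r k) := by
  have hm' : (m : ℝ) ≠ 0 := Nat.cast_ne_zero.2 hm
  have : Continuous fun k => r k / R k := hr.div hR hR₀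
  have hbump : Continuous fun k => driftBump (R k) m (r k) := by
    refine Continuous.div (continuous_const.sub (Real.continuous_cos.comp ?_)) (by fun_prop)
      fun k => mul_ne_zero (by positivity) (hR₀ k)
    exact hr.div (by fun_prop) fun k => mul_ne_zero hm' (hR₀ k)
  unfold driftCircle
  fun_prop

theorem integral_driftCircle [CompleteSpace E] (hR : R ≠ 0) (φ : ℝ) :
    ∫ r in (0 : ℝ)..φ * R, driftCircle R m w n D r =
      (R * Real.sin φ) • w + (R * (1 - Real.cos φ)) • n +
        (∫ r in (0 : ℝ)..φ * R, driftBump R m r) • D := by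
  have hcos : IntervalIntegrable (fun r => Real.cos (r / R) • w) volume 0 (φ * R) :=
    Continuous.intervalIntegrable (by fun_prop) _ _
  have hsin : IntervalIntegrable (fun r => Real.sin (r / R) • n) volume 0 (φ * R) :=
    Continuous.intervalIntegrable (by fun_prop) _ _
  have hbump : IntervalIntegrable (fun r => driftBump R m r • D) volume 0 (φ * R) :=
    (continuous_driftBump.smul continuous_const).intervalIntegrable _ _
  simp only [driftCircle]
  rw [intervalIntegral.integral_add (hcos.add hsin) hbump, intervalIntegral.integral_add hcos hsin,
    intervalIntegral.integral_smul_const, intervalIntegral.integral_smul_const,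
    intervalIntegral.integral_smul_const, intervalIntegral.integral_comp_div Real.cos hR,
    intervalIntegral.integral_comp_div Real.sin hR, integral_cos, integral_sin, zero_div,
    mul_div_cancel_right₀ φ hR, Real.sin_zero, Real.cos_zero, sub_zero, smul_eq_mul, smul_eq_mul]

theorem integral_driftCircle_period [CompleteSpace E] (hR : R ≠ 0) (hm : m ≠ 0) :
    ∫ r in (0 : ℝ)..m * (2 * π) * R, driftCircle R m w n D r = D := by
  rw [integral_driftCircle hR, integral_driftBump hR hm, sin_nat_mul_two_pi,
    Real.cos_nat_mul_two_pi]
  simp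

namespace IsOrthonormalPair

theorem le_norm_driftCircle (h : IsOrthonormalPair w n) (hR : 2 ≤ R) (hm : m ≠ 0)
    (hD : 2 * ‖D‖ ≤ m) (r : ℝ) : 11 / 12 ≤ ‖driftCircle R m w n D r‖ := by
  have hcircle := h.norm_cos_smul_add_sin_smul (r / R)
  have hdrift := norm_driftBump_smul_le hR hm hD r
  have := norm_sub_le_norm_add (Real.cos (r / R) • w + Real.sin (r / R) • n)
    (driftBump R m r • D)
  rw [driftCircle]
  linarith

/-- The radius is at least two and the drift is slow, so the acceleration is at most
`1 / 2 + 1 / 12` while the speed is at least `1 - 1 / 12`. -/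
theorem isConstrainedOn_driftCircle (h : IsOrthonormalPair w n) (hR : 2 ≤ R) (hm : m ≠ 0)
    (hD : 2 * ‖D‖ ≤ m) (a b : ℝ) : IsConstrainedOn (driftCircle R m w n D) a b where
  ne_zero r _ := norm_pos_iff.1 (by linarith [h.le_norm_driftCircle hR hm hD r])
  exists_hasDerivAt := by
    refine ⟨∅, fun r _ _ => ?_⟩
    have hangle : HasDerivAt (fun r : ℝ => r / R) (1 / R) r := (hasDerivAt_id r).div_const R
    refine ⟨_, ((hangle.cos.smul_const w).add (hangle.sin.smul_const n)).add
      ((hasDerivAt_driftBump r).differentiableAt.hasDerivAt.smul_const D), ?_⟩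
    have hcircle : ‖(-Real.sin (r / R) * (1 / R)) • w + (Real.cos (r / R) * (1 / R)) • n‖
        ≤ 1 / 2 := by
      have hunit := h.norm_cos_smul_add_sin_smul (r / R + π / 2)
      rw [Real.cos_add_pi_div_two, Real.sin_add_pi_div_two] at hunit
      rw [mul_comm, mul_comm (Real.cos (r / R)), mul_smul, mul_smul, ← smul_add, norm_smul, hunit,
        mul_one, Real.norm_of_nonneg (by positivity)]
      gcongr
    have hspeed : (11 / 12) ^ 2 ≤ ‖driftCircle R m w n D r‖ ^ 2 := by
      gcongr
      exact h.le_norm_driftCircle hR hm hD r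
    calc _ ≤ 1 / 2 + 1 / 12 := norm_add_le_of_le hcircle (norm_deriv_driftBump_smul_le hR hm hD r)
      _ ≤ (11 / 12) ^ 2 := by norm_num
      _ ≤ _ := hspeed

theorem isVelocity_driftCircle [CompleteSpace E] (h : IsOrthonormalPair w n) (hR : 2 ≤ R)
    (hm : m ≠ 0) (hD : 2 * ‖D‖ ≤ m) :
    IsVelocity D (unitRescale (driftCircle R m w n D) 0 (m * (2 * π) * R)) :=
  (h.isConstrainedOn_driftCircle hR hm hD _ _).isVelocity_unitRescale
    (continuous_driftCircle continuous_const (fun _ => by positivity) hm continuous_id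
      continuous_const continuous_const continuous_const)
    (by positivity) (integral_driftCircle_period (by positivity) hm)

theorem pi_lt_arcLength_driftCircle (h : IsOrthonormalPair w n) (hR : 2 ≤ R) (hm : m ≠ 0)
    (hD : 2 * ‖D‖ ≤ m) :
    π < arcLength (unitRescale (driftCircle R m w n D) 0 (m * (2 * π) * R)) 1 := by
  have hm' : 1 ≤ (m : ℝ) := by exact_mod_cast Nat.one_le_iff_ne_zero.2 hm
  have hcont : Continuous (driftCircle R m w n D) :=
    continuous_driftCircle continuous_const (fun _ => by positivity) hm continuous_id
      continuous_const continuous_const continuous_const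
  have hspeed (t : ℝ) : 2 * π ≤ ‖unitRescale (driftCircle R m w n D) 0 (m * (2 * π) * R) t‖ := by
    rw [unitRescale, sub_zero, norm_smul, Real.norm_of_nonneg (by positivity)]
    calc 2 * π ≤ 1 * (2 * π) * 2 * (11 / 12) := by linarith [Real.pi_pos]
      _ ≤ _ := by gcongr; exact h.le_norm_driftCircle hR hm hD _
  calc π < ∫ _ in (0 : ℝ)..1, 2 * π := by
        rw [intervalIntegral.integral_const, sub_zero, one_smul]
        linarith [Real.pi_pos]
    _ ≤ _ := intervalIntegral.integral_mono_on zero_le_one intervalIntegrable_const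
        (Continuous.intervalIntegrable (by unfold unitRescale; fun_prop) _ _) fun t _ => hspeed t

theorem velocityHomotopic_driftCircle [CompleteSpace E] {R : I → ℝ} {w n : I → E}
    (h : ∀ k, IsOrthonormalPair (w k) (n k)) (hR : ∀ k, 2 ≤ R k) (hR_cont : Continuous R)
    (hw_cont : Continuous w) (hn_cont : Continuous n) (hm : m ≠ 0) (hD : 2 * ‖D‖ ≤ m) :
    VelocityHomotopic D (unitRescale (driftCircle (R 0) m (w 0) (n 0) D) 0 (m * (2 * π) * R 0))
      (unitRescale (driftCircle (R 1) m (w 1) (n 1) D) 0 (m * (2 * π) * R 1)) := by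
  have hR_pos (k : I) : 0 < R k := two_pos.trans_le (hR k)
  exact velocityHomotopic_unitRescale (g := fun k => driftCircle (R k) m (w k) (n k) D)
    (a := fun _ => 0) (b := fun k => m * (2 * π) * R k)
    (continuous_driftCircle (K := I × ℝ) (R := fun z => R z.1) (hR_cont.comp continuous_fst)
      (fun z => (hR_pos z.1).ne') hm continuous_snd (hw_cont.comp continuous_fst)
      (hn_cont.comp continuous_fst) continuous_const)
    continuous_const (by fun_prop) (fun k => mul_pos (by positivity) (hR_pos k))
    (fun k => (h k).isConstrainedOn_driftCircle (hR k) hm hD _ _)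
    fun k => integral_driftCircle_period (hR_pos k).ne' hm

end IsOrthonormalPair

end DriftCircle

/-! ### Winding long arcs around their endpoint -/

section Winding

variable {E : Type*} [NormedAddCommGroup E] [InnerProductSpace ℝ E]

/-- The point at time `c` of the arc with unit tangent `u` over `[0, s]` lies at distance `R ≥ 2`
from the endpoint, in the direction `-n`, and the tangent there is orthogonal to `n`. The unit speed
circle of radius `R` about the endpoint can therefore be inserted at that point. -/
structure IsWindingPoint (s : ℝ) (u : ℝ → E) (c R : ℝ) (n : E) : Prop where
  mem : c ∈ Icc 0 s
  two_le : 2 ≤ R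
  isOrthonormalPair : IsOrthonormalPair (u c) n
  integral_eq : ∫ t in c..s, u t = R • n

theorem continuous_intervalIntegral_of_continuous {K : Type*} [TopologicalSpace K] {u : ℝ → E}
    (hu : Continuous u) {a b : K → ℝ} (ha : Continuous a) (hb : Continuous b) :
    Continuous fun k => ∫ t in a k..b k, u t := by
  have hint (p q : ℝ) : IntervalIntegrable u volume p q := hu.intervalIntegrable p q
  have hprimitive := intervalIntegral.continuous_primitive hint 0
  rw [show (fun k => ∫ t in a k..b k, u t) =
      fun k => (∫ t in (0 : ℝ)..b k, u t) - ∫ t in (0 : ℝ)..a k, u t from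
    funext fun k => (intervalIntegral.integral_interval_sub_left (hint _ _) (hint _ _)).symm]
  exact (hprimitive.comp hb).sub (hprimitive.comp ha)

theorem two_le_norm_integral_of_lipschitzWith [CompleteSpace E] {u : ℝ → E}
    (hunit : ∀ t, ‖u t‖ = 1) (hlip : LipschitzWith 1 u) (a : ℝ) :
    2 ≤ ‖∫ t in a..a + π, u t‖ := by
  have hinner := sin_add_sin_le_inner_integral hunit hlip (a := a) (b := a + π) (c := a + π / 2)
    (by linarith [Real.pi_pos]) (by linarith [Real.pi_pos]) (by linarith)
  rw [show a + π / 2 - a = π / 2 by ring, show a + π - (a + π / 2) = π / 2 by ring,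
    Real.sin_pi_div_two] at hinner
  calc (2 : ℝ) = 1 + 1 := by norm_num
    _ ≤ ⟪u (a + π / 2), ∫ t in a..a + π, u t⟫_ℝ := hinner
    _ ≤ ‖∫ t in a..a + π, u t‖ := by
      simpa only [hunit, one_mul] using real_inner_le_norm (u (a + π / 2)) (∫ t in a..a + π, u t)

namespace IsUnitTangent

variable {s : ℝ} {u : ℝ → E}

theorem norm_integral_sub_integral_le (hu : IsUnitTangent s u) {a b : ℝ}
    (ha : 0 ≤ a) (hab : a ≤ b) (hb : b ≤ s) :
    ‖(∫ t in (0 : ℝ)..s, u t) - ∫ t in a..b, u t‖ ≤ s := by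
  have hint (p q : ℝ) : IntervalIntegrable u volume p q := hu.continuous.intervalIntegrable p q
  have hle {p q : ℝ} (hpq : p ≤ q) : ‖∫ t in p..q, u t‖ ≤ q - p := by
    simpa [abs_of_nonneg (sub_nonneg.2 hpq)] using
      intervalIntegral.norm_integral_le_of_norm_le_const (a := p) (b := q)
        fun t _ => (hu.norm_eq_one t).le
  have hends : (∫ t in (0 : ℝ)..s, u t) - ∫ t in a..b, u t =
      (∫ t in (0 : ℝ)..a, u t) + ∫ t in b..s, u t := by
    rw [← intervalIntegral.integral_add_adjacent_intervals (hint 0 a) (hint a s),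
      ← intervalIntegral.integral_add_adjacent_intervals (hint a b) (hint b s)]
    abel
  rw [hends]
  linarith [norm_add_le (∫ t in (0 : ℝ)..a, u t) (∫ t in b..s, u t), hle ha, hle hb]

/-- The point farthest from the endpoint is a winding point. -/
theorem exists_isWindingPoint [CompleteSpace E] (hu : IsUnitTangent s u) (hs : π < s)
    (hchord : ‖∫ t in (0 : ℝ)..s, u t‖ < 2) : ∃ c R n, IsWindingPoint s u c R n := by
  have hderiv (t : ℝ) : HasDerivAt (fun t => ‖∫ r in t..s, u r‖ ^ 2)
      (2 * ⟪∫ r in t..s, u r, -u t⟫_ℝ) t :=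
    (intervalIntegral.integral_hasDerivAt_left (hu.continuous.intervalIntegrable t s)
      (hu.continuous.stronglyMeasurableAtFilter _ _) hu.continuous.continuousAt).norm_sq
  obtain ⟨c, hc, hmax⟩ := isCompact_Icc.exists_isMaxOn (nonempty_Icc.2 hu.pos.le)
    fun t _ => (hderiv t).continuousAt.continuousWithinAt
  have hfar : 2 ≤ ‖∫ r in c..s, u r‖ := by
    have hhalf := two_le_norm_integral_of_lipschitzWith hu.norm_eq_one hu.lipschitzWith (s - π)
    rw [sub_add_cancel] at hhalf
    exact hhalf.trans ((sq_le_sq₀ (norm_nonneg _) (norm_nonneg _)).1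
      (hmax ⟨by linarith, by linarith [Real.pi_pos]⟩))
  have hc_interior : c ∈ Ioo 0 s := by
    refine ⟨hc.1.lt_of_ne ?_, hc.2.lt_of_ne ?_⟩ <;> rintro rfl
    · exact hfar.not_gt hchord
    · rw [intervalIntegral.integral_same, norm_zero] at hfar
      linarith
  have horth : ⟪u c, ∫ r in c..s, u r⟫_ℝ = 0 := by
    have := (hmax.isLocalMax (Icc_mem_nhds hc_interior.1 hc_interior.2)).hasDerivAt_eq_zero
      (hderiv c)
    rw [inner_neg_right, real_inner_comm] at this
    linarith
  have hne : (∫ r in c..s, u r) ≠ 0 := norm_pos_iff.1 (by linarith)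
  refine ⟨c, ‖∫ r in c..s, u r‖, NormedSpace.normalize (∫ r in c..s, u r), hc, hfar,
    ⟨hu.norm_eq_one c, NormedSpace.norm_normalize hne, ?_⟩,
    (NormedSpace.norm_smul_normalize _).symm⟩
  rw [NormedSpace.normalize, real_inner_smul_right, horth, mul_zero]

end IsUnitTangent

namespace IsWindingPoint

variable {s : ℝ} {u : ℝ → E} {c R : ℝ} {n : E} {m : ℕ} {φ : ℝ} {D : E}

/-- The velocity `u`, shifted by `c`, with a drifting circular arc of angle `φ` inserted at time `0`
and the remainder rotated so as to continue it. -/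
def wound (hc : IsWindingPoint s u c R n) (m : ℕ) (φ : ℝ) (D : E) (r : ℝ) : E :=
  if r ≤ 0 then u (c + r) else
  if r ≤ φ * R then driftCircle R m (u c) n D r else
  hc.isOrthonormalPair.rotation φ (u (c - φ * R + r))

theorem pos (hc : IsWindingPoint s u c R n) : 0 < R := two_pos.trans_le hc.two_le

theorem driftCircle_mul_radius (hc : IsWindingPoint s u c R n)
    (hclosed : driftBump R m (φ * R) • D = 0) :
    driftCircle R m (u c) n D (φ * R) = hc.isOrthonormalPair.rotation φ (u c) := by
  rw [driftCircle, hclosed, add_zero, mul_div_cancel_right₀ φ hc.pos.ne',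
    IsOrthonormalPair.rotation_apply, hc.isOrthonormalPair.planeRotation_left]

theorem wound_of_nonpos (hc : IsWindingPoint s u c R n) {r : ℝ} (hr : r ≤ 0) :
    hc.wound m φ D r = u (c + r) := if_pos hr

theorem wound_of_mem_Icc (hc : IsWindingPoint s u c R n) {r : ℝ} (hr : r ∈ Icc 0 (φ * R)) :
    hc.wound m φ D r = driftCircle R m (u c) n D r := by
  rcases hr.1.eq_or_lt with rfl | hpos
  · rw [hc.wound_of_nonpos le_rfl, driftCircle_zero, add_zero]
  · rw [wound, if_neg hpos.not_ge, if_pos hr.2]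

theorem wound_of_le (hc : IsWindingPoint s u c R n) (hφ : 0 ≤ φ)
    (hclosed : driftBump R m (φ * R) • D = 0) {r : ℝ} (hr : φ * R ≤ r) :
    hc.wound m φ D r = hc.isOrthonormalPair.rotation φ (u (c - φ * R + r)) := by
  have hφR : 0 ≤ φ * R := mul_nonneg hφ hc.pos.le
  rcases hr.eq_or_lt with rfl | hlt
  · rw [hc.wound_of_mem_Icc ⟨hφR, le_rfl⟩, hc.driftCircle_mul_radius hclosed, sub_add_cancel]
  · rw [wound, if_neg (hφR.trans_lt hlt).not_ge, if_neg hlt.not_ge]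

theorem continuous_wound (hc : IsWindingPoint s u c R n) (hu : Continuous u) (hm : m ≠ 0)
    {K : Type*} [TopologicalSpace K] {φ r : K → ℝ} {D : K → E} (hφ : Continuous φ)
    (hr : Continuous r) (hD : Continuous D) (hφ_nonneg : ∀ k, 0 ≤ φ k)
    (hclosed : ∀ k, driftBump R m (φ k * R) • D k = 0) :
    Continuous fun k => hc.wound m (φ k) (D k) (r k) := by
  have hcircle : Continuous fun k => driftCircle R m (u c) n (D k) (r k) :=
    continuous_driftCircle continuous_const (fun _ => hc.pos.ne') hm hr continuous_const
      continuous_const hD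
  have hrotated : Continuous fun k =>
      hc.isOrthonormalPair.rotation (φ k) (u (c - φ k * R + r k)) := by
    simp only [IsOrthonormalPair.rotation_apply, planeRotation_apply]
    fun_prop
  refine Continuous.if_le (by fun_prop) ?_ hr continuous_const fun k hk => ?_
  · refine hcircle.if_le hrotated hr (by fun_prop) fun k hk => ?_
    rw [hk, hc.driftCircle_mul_radius (hclosed k), sub_add_cancel]
  · rw [hk, if_pos (mul_nonneg (hφ_nonneg k) hc.pos.le), driftCircle_zero, add_zero]

theorem isConstrainedOn_wound (hc : IsWindingPoint s u c R n) (hu : IsUnitTangent s u) (hm : m ≠ 0)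
    (hD : 2 * ‖D‖ ≤ m) (hφ : 0 ≤ φ) (hclosed : driftBump R m (φ * R) • D = 0) {a b : ℝ}
    (ha : 0 ≤ a) (hac : a ≤ c) (hb : 0 ≤ b) (hbc : b ≤ s - c) :
    IsConstrainedOn (hc.wound m φ D) (-a) (φ * R + b) := by
  have hinitial : IsConstrainedOn (hc.wound m φ D) (-a) 0 :=
    (hu.isConstrainedOn.mono (a' := c + -a) (b' := c + 0) (by linarith)
      (by linarith [hc.mem.2])).comp_const_add.congr fun r hr => (hc.wound_of_nonpos hr.2).symm
  have hcircle : IsConstrainedOn (hc.wound m φ D) 0 (φ * R) :=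
    (hc.isOrthonormalPair.isConstrainedOn_driftCircle hc.two_le hm hD _ _).congr
      fun r hr => (hc.wound_of_mem_Icc hr).symm
  have hfinal : IsConstrainedOn (hc.wound m φ D) (φ * R) (φ * R + b) :=
    ((hu.isConstrainedOn.mono (a' := c - φ * R + φ * R) (b' := c - φ * R + (φ * R + b))
      (by linarith) (by linarith)).comp_const_add.linearIsometry_comp
        (hc.isOrthonormalPair.rotation φ)).congr fun r hr =>
          (hc.wound_of_le hφ hclosed hr.1).symm
  exact (hinitial.union hcircle).union hfinal

theorem integral_wound [CompleteSpace E] (hc : IsWindingPoint s u c R n) (hu : Continuous u)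
    (hm : m ≠ 0) (hφ : 0 ≤ φ) (hclosed : driftBump R m (φ * R) • D = 0) {a b : ℝ} (ha : 0 ≤ a)
    (hb : 0 ≤ b) :
    ∫ r in (-a)..φ * R + b, hc.wound m φ D r = (∫ t in (c - a)..c, u t) +
      ((R * Real.sin φ) • u c + (R * (1 - Real.cos φ)) • n +
        (∫ r in (0 : ℝ)..φ * R, driftBump R m r) • D) +
      planeRotation (u c) n φ (∫ t in c..c + b, u t) := by
  have hφR : 0 ≤ φ * R := mul_nonneg hφ hc.pos.le
  have hwound (p q : ℝ) : IntervalIntegrable (hc.wound m φ D) volume p q :=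
    (hc.continuous_wound hu hm continuous_const continuous_id continuous_const (fun _ => hφ)
      fun _ => hclosed).intervalIntegrable p q
  have hinitial : ∫ r in (-a)..0, hc.wound m φ D r = ∫ t in (c - a)..c, u t := by
    rw [intervalIntegral.integral_congr (g := fun r => u (c + r)) fun r hr =>
        hc.wound_of_nonpos (uIcc_of_le (neg_nonpos.2 ha) ▸ hr).2,
      intervalIntegral.integral_comp_add_left u c, ← sub_eq_add_neg, add_zero]
  have hcircle : ∫ r in (0 : ℝ)..φ * R, hc.wound m φ D r =
      ∫ r in (0 : ℝ)..φ * R, driftCircle R m (u c) n D r :=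
    intervalIntegral.integral_congr fun r hr => hc.wound_of_mem_Icc (uIcc_of_le hφR ▸ hr)
  have hfinal : ∫ r in φ * R..φ * R + b, hc.wound m φ D r =
      planeRotation (u c) n φ (∫ t in c..c + b, u t) := by
    rw [intervalIntegral.integral_congr
        (g := fun r => hc.isOrthonormalPair.rotation φ (u (c - φ * R + r))) fun r hr =>
          hc.wound_of_le hφ hclosed (uIcc_of_le (le_add_of_nonneg_right hb) ▸ hr).1,
      intervalIntegral.integral_comp_add_left
        (fun t => hc.isOrthonormalPair.rotation φ (u t)) (c - φ * R),
      sub_add_cancel, ← add_assoc, sub_add_cancel]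
    exact (hc.isOrthonormalPair.rotation φ).toContinuousLinearMap.intervalIntegral_comp_comm
      (hu.intervalIntegrable c (c + b))
  rw [← intervalIntegral.integral_add_adjacent_intervals (hwound (-a) (φ * R)) (hwound _ _),
    ← intervalIntegral.integral_add_adjacent_intervals (hwound (-a) 0) (hwound _ _), hinitial,
    hcircle, hfinal, integral_driftCircle hc.pos.ne']

theorem velocityHomotopic_wound [CompleteSpace E] (hc : IsWindingPoint s u c R n)
    (hu : IsUnitTangent s u) (hm : m ≠ 0) {v : E} {φ a b : I → ℝ} {D : I → E}
    (hφ_cont : Continuous φ) (ha_cont : Continuous a) (hb_cont : Continuous b)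
    (hD_cont : Continuous D) (hD : ∀ k, 2 * ‖D k‖ ≤ m) (hφ : ∀ k, 0 ≤ φ k)
    (hclosed : ∀ k, driftBump R m (φ k * R) • D k = 0) (ha : ∀ k, a k ∈ Icc 0 c)
    (hb : ∀ k, b k ∈ Icc 0 (s - c)) (hpos : ∀ k, 0 < a k + φ k * R + b k)
    (hint : ∀ k, ∫ r in (-a k)..φ k * R + b k, hc.wound m (φ k) (D k) r = v) :
    VelocityHomotopic v (unitRescale (hc.wound m (φ 0) (D 0)) (-a 0) (φ 0 * R + b 0))
      (unitRescale (hc.wound m (φ 1) (D 1)) (-a 1) (φ 1 * R + b 1)) :=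
  velocityHomotopic_unitRescale (g := fun k => hc.wound m (φ k) (D k)) (a := fun k => -a k)
    (b := fun k => φ k * R + b k)
    (hc.continuous_wound (K := I × ℝ) hu.continuous hm (φ := fun z => φ z.1) (D := fun z => D z.1)
      (by fun_prop) continuous_snd (by fun_prop) (fun z => hφ z.1) fun z => hclosed z.1)
    (by fun_prop) (by fun_prop) (fun k => by linarith [hpos k])
    (fun k => hc.isConstrainedOn_wound hu hm (hD k) (hφ k) (hclosed k) (ha k).1 (ha k).2 (hb k).1
      (hb k).2) hint

/-- The inserted arc is centered at the endpoint, about which the rest of the arc is rotated. -/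
theorem integral_wound_eq_integral [CompleteSpace E] (hc : IsWindingPoint s u c R n)
    (hu : Continuous u) (hm : m ≠ 0) (hφ : 0 ≤ φ) :
    ∫ r in (-c)..φ * R + (s - c), hc.wound m φ 0 r = ∫ t in (0 : ℝ)..s, u t := by
  rw [hc.integral_wound hu hm hφ (smul_zero _) hc.mem.1 (sub_nonneg.2 hc.mem.2), sub_self,
    add_sub_cancel, ← intervalIntegral.integral_add_adjacent_intervals (hu.intervalIntegrable 0 c)
      (hu.intervalIntegrable c s), hc.integral_eq, map_smul,
    hc.isOrthonormalPair.planeRotation_right]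
  module

theorem wound_zero_zero (hc : IsWindingPoint s u c R n) (r : ℝ) :
    hc.wound m 0 0 r = u (c + r) := by
  rcases le_total r 0 with hr | hr
  · exact hc.wound_of_nonpos hr
  · rw [hc.wound_of_le le_rfl (smul_zero _) (by rwa [zero_mul]), zero_mul, sub_zero,
      IsOrthonormalPair.rotation_apply]
    simpa using planeRotation_nat_mul_two_pi (u c) n (u (c + r)) 0

theorem velocityHomotopic_wound_of_tangent [CompleteSpace E] (hc : IsWindingPoint s u c R n)
    (hu : IsUnitTangent s u) (hm : m ≠ 0) {v : E} (hint : ∫ t in (0 : ℝ)..s, u t = v) :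
    VelocityHomotopic v (unitRescale u 0 s)
      (unitRescale (hc.wound m (m * (2 * π)) 0) (-c) (m * (2 * π) * R + (s - c))) := by
  have hφ (k : I) : 0 ≤ (k : ℝ) * (m * (2 * π)) := mul_nonneg k.2.1 (by positivity)
  have hφR (k : I) : 0 ≤ (k : ℝ) * (m * (2 * π)) * R := mul_nonneg (hφ k) hc.pos.le
  refine (hc.velocityHomotopic_wound (m := m) hu hm (φ := fun k => (k : ℝ) * (m * (2 * π)))
    (a := fun _ => c) (b := fun _ => s - c) (D := fun _ => 0) (by fun_prop) continuous_const
    continuous_const continuous_const (fun _ => by simp) hφ (fun _ => smul_zero _)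
    (fun _ => ⟨hc.mem.1, le_rfl⟩) (fun _ => ⟨sub_nonneg.2 hc.mem.2, le_rfl⟩)
    (fun k => by linarith [hφR k, hu.pos])
    fun k => (hc.integral_wound_eq_integral hu.continuous hm (hφ k)).trans hint).congr
      (fun t _ => ?_) fun t _ => ?_
  · simp only [unitRescale, Icc.coe_zero, zero_mul, zero_add, hc.wound_zero_zero, sub_neg_eq_add,
      sub_add_cancel, sub_zero, add_neg_cancel_left]
  · simp only [Icc.coe_one, one_mul]

theorem integral_wound_period [CompleteSpace E] (hc : IsWindingPoint s u c R n)
    (hu : Continuous u) (hm : m ≠ 0) {a b : ℝ} (ha : 0 ≤ a) (hb : 0 ≤ b) :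
    ∫ r in (-a)..m * (2 * π) * R + b, hc.wound m (m * (2 * π)) D r =
      (∫ t in (c - a)..c + b, u t) + D := by
  rw [hc.integral_wound hu hm (by positivity)
      (by rw [driftBump_period hc.pos.ne' hm, zero_smul]) ha hb,
    integral_driftBump hc.pos.ne' hm, Real.cos_nat_mul_two_pi, sin_nat_mul_two_pi,
    planeRotation_nat_mul_two_pi, ← intervalIntegral.integral_add_adjacent_intervals
      (hu.intervalIntegrable (c - a) c) (hu.intervalIntegrable c (c + b))]
  module

theorem isVelocity_wound [CompleteSpace E] (hc : IsWindingPoint s u c R n) (hu : IsUnitTangent s u)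
    (hm : m ≠ 0) (hφ : 0 ≤ φ) {v : E} (hint : ∫ t in (0 : ℝ)..s, u t = v) :
    IsVelocity v (unitRescale (hc.wound m φ 0) (-c) (φ * R + (s - c))) :=
  (hc.isConstrainedOn_wound hu hm (by simp) hφ (smul_zero _) hc.mem.1 le_rfl
    (sub_nonneg.2 hc.mem.2) le_rfl).isVelocity_unitRescale
    (hc.continuous_wound hu.continuous hm continuous_const continuous_id continuous_const
      (fun _ => hφ) fun _ => smul_zero _)
    (by linarith [mul_nonneg hφ hc.pos.le, hu.pos])
    ((hc.integral_wound_eq_integral hu.continuous hm hφ).trans hint)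

/-- The drift of the circles makes up for the displacement along the ends of the arc cut off. -/
theorem velocityHomotopic_wound_period [CompleteSpace E] (hc : IsWindingPoint s u c R n)
    (hu : IsUnitTangent s u) (hm : m ≠ 0) (hms : 2 * s ≤ m) {v : E}
    (hint : ∫ t in (0 : ℝ)..s, u t = v) {a b : I → ℝ} {D : I → E} (ha_cont : Continuous a)
    (hb_cont : Continuous b) (ha : ∀ k, a k ∈ Icc 0 c) (hb : ∀ k, b k ∈ Icc 0 (s - c))
    (hD : ∀ k, D k = v - ∫ t in (c - a k)..c + b k, u t) :
    VelocityHomotopic v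
      (unitRescale (hc.wound m (m * (2 * π)) (D 0)) (-a 0) (m * (2 * π) * R + b 0))
      (unitRescale (hc.wound m (m * (2 * π)) (D 1)) (-a 1) (m * (2 * π) * R + b 1)) := by
  have hpos : 0 < (m : ℝ) * (2 * π) * R := mul_pos (by positivity) hc.pos
  have hD_cont : Continuous D := by
    rw [funext hD]
    exact continuous_const.sub <| continuous_intervalIntegral_of_continuous hu.continuous
      (continuous_const.sub ha_cont) (continuous_const.add hb_cont)
  have hD_norm (k : I) : 2 * ‖D k‖ ≤ m := by
    have hle := hu.norm_integral_sub_integral_le (a := c - a k) (b := c + b k)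
      (by linarith [(ha k).2]) (by linarith [(ha k).1, (hb k).1]) (by linarith [(hb k).2])
    rw [hint, ← hD k] at hle
    linarith
  exact hc.velocityHomotopic_wound hu hm (φ := fun _ => m * (2 * π)) continuous_const ha_cont
    hb_cont hD_cont hD_norm (fun _ => by positivity)
    (fun k => by rw [driftBump_period hc.pos.ne' hm, zero_smul]) ha hb
    (fun k => by linarith [(ha k).1, (hb k).1]) fun k => by
      rw [hc.integral_wound_period hu.continuous hm (ha k).1 (hb k).1, hD k, add_sub_cancel]

theorem velocityHomotopic_driftCircle_of_wound [CompleteSpace E] (hc : IsWindingPoint s u c R n)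
    (hu : IsUnitTangent s u) (hm : m ≠ 0) (hms : 2 * s ≤ m) {v : E}
    (hint : ∫ t in (0 : ℝ)..s, u t = v) :
    VelocityHomotopic v
      (unitRescale (hc.wound m (m * (2 * π)) 0) (-c) (m * (2 * π) * R + (s - c)))
      (unitRescale (driftCircle R m (u c) n v) 0 (m * (2 * π) * R)) := by
  have hshrink (k : I) {z : ℝ} (hz : 0 ≤ z) : (1 - k) * z ∈ Icc 0 z :=
    ⟨mul_nonneg (sub_nonneg.2 k.2.2) hz, mul_le_of_le_one_left hz (by linarith [k.2.1])⟩
  refine (hc.velocityHomotopic_wound_period hu hm hms hint (a := fun k => (1 - k) * c)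
    (b := fun k => (1 - k) * (s - c)) (by fun_prop) (by fun_prop) (fun k => hshrink k hc.mem.1)
    (fun k => hshrink k (sub_nonneg.2 hc.mem.2)) fun _ => rfl).congr ?_ ?_
  · simp only [Icc.coe_zero, sub_zero, one_mul, sub_self, add_sub_cancel, hint]
    exact fun _ _ => rfl
  · simp only [Icc.coe_one, sub_self, zero_mul, sub_zero, add_zero, neg_zero,
      intervalIntegral.integral_same]
    exact unitRescale_congr (mul_nonneg (by positivity) hc.pos.le)
      fun r hr => hc.wound_of_mem_Icc hr

end IsWindingPoint

end Winding

/-! ### Long arcs are joined -/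

namespace IsOrthonormalPair

variable {E : Type*} [NormedAddCommGroup E] [InnerProductSpace ℝ E] {w n w' n' : E}

theorem exists_common_right (hE : 2 < Module.finrank ℝ E) (hw : ‖w‖ = 1)
    (hw' : ‖w'‖ = 1) : ∃ e, IsOrthonormalPair w e ∧ IsOrthonormalPair w' e := by
  have : FiniteDimensional ℝ E := Module.finite_of_finrank_pos (by omega)
  classical
  have hspan : Module.finrank ℝ (Submodule.span ℝ {w, w'}) ≤ 2 := by
    have hle := finrank_span_finset_le_card (R := ℝ) {w, w'}
    rw [Finset.coe_pair] at hle
    exact hle.trans Finset.card_le_two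
  have hne : (Submodule.span ℝ {w, w'})ᗮ ≠ ⊥ := by
    rw [Ne, Submodule.orthogonal_eq_bot_iff]
    intro htop
    rw [htop, finrank_top] at hspan
    omega
  obtain ⟨e, he, he_ne⟩ := Submodule.exists_mem_ne_zero_of_ne_bot hne
  have horth {z : E} (hz : z ∈ ({w, w'} : Set E)) : ⟪z, NormedSpace.normalize e⟫_ℝ = 0 := by
    rw [NormedSpace.normalize, real_inner_smul_right,
      (Submodule.mem_orthogonal _ _).1 he z (Submodule.subset_span hz), mul_zero]
  exact ⟨NormedSpace.normalize e, ⟨hw, NormedSpace.norm_normalize he_ne, horth (by simp)⟩,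
    ⟨hw', NormedSpace.norm_normalize he_ne, horth (by simp)⟩⟩

theorem joinedIn_of_left_eq (hE : 2 < Module.finrank ℝ E) (h : IsOrthonormalPair w n)
    (h' : IsOrthonormalPair w n') :
    JoinedIn {z : E × E | IsOrthonormalPair z.1 z.2} (w, n) (w, n') := by
  have : FiniteDimensional ℝ E := Module.finite_of_finrank_pos (by omega)
  have hrank : 1 < Module.rank ℝ (ℝ ∙ w)ᗮ := by
    have hadd := Submodule.finrank_add_finrank_orthogonal (ℝ ∙ w)
    rw [finrank_span_singleton (norm_ne_zero_iff.1 (h.norm_left ▸ one_ne_zero))] at hadd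
    rw [← Module.finrank_eq_rank]
    exact_mod_cast show 1 < Module.finrank ℝ (ℝ ∙ w)ᗮ by omega
  have hmem {e : E} (he : IsOrthonormalPair w e) : e ∈ (ℝ ∙ w)ᗮ :=
    Submodule.mem_orthogonal_singleton_iff_inner_right.2 he.inner_eq_zero
  obtain ⟨γ, hγ⟩ := (isPathConnected_sphere hrank 0 zero_le_one).joinedIn
    ⟨n, hmem h⟩ (by simpa using h.norm_right) ⟨n', hmem h'⟩ (by simpa using h'.norm_right)
  refine ⟨γ.map (f := fun z : (ℝ ∙ w)ᗮ => (w, (z : E))) (by fun_prop), fun k => ?_⟩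
  exact ⟨h.norm_left, by simpa using hγ k,
    Submodule.mem_orthogonal_singleton_iff_inner_right.1 (γ k).2⟩

theorem joinedIn_of_right_eq (hE : 2 < Module.finrank ℝ E) (h : IsOrthonormalPair w n)
    (h' : IsOrthonormalPair w' n) :
    JoinedIn {z : E × E | IsOrthonormalPair z.1 z.2} (w, n) (w', n) := by
  obtain ⟨γ, hγ⟩ := joinedIn_of_left_eq hE h.symm h'.symm
  exact ⟨γ.map continuous_swap, fun k => (hγ k).symm⟩

theorem joinedIn (hE : 2 < Module.finrank ℝ E) (h : IsOrthonormalPair w n)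
    (h' : IsOrthonormalPair w' n') :
    JoinedIn {z : E × E | IsOrthonormalPair z.1 z.2} (w, n) (w', n') := by
  obtain ⟨e, he, he'⟩ := exists_common_right hE h.norm_left h'.norm_left
  exact ((joinedIn_of_left_eq hE h he).trans (joinedIn_of_right_eq hE he he')).trans
    (joinedIn_of_left_eq hE he' h')

theorem velocityHomotopic_driftCircle_of_two_lt_finrank (hE : 2 < Module.finrank ℝ E)
    (h : IsOrthonormalPair w n) (h' : IsOrthonormalPair w' n') {R R' : ℝ} (hR : 2 ≤ R)
    (hR' : 2 ≤ R') {m : ℕ} {D : E} (hm : m ≠ 0) (hD : 2 * ‖D‖ ≤ m) :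
    VelocityHomotopic D (unitRescale (driftCircle R m w n D) 0 (m * (2 * π) * R))
      (unitRescale (driftCircle R' m w' n' D) 0 (m * (2 * π) * R')) := by
  have : FiniteDimensional ℝ E := Module.finite_of_finrank_pos (by omega)
  have : CompleteSpace E := FiniteDimensional.complete ℝ E
  obtain ⟨γ, hγ⟩ := h.joinedIn hE h'
  have hradius (k : I) : 2 ≤ (1 - (k : ℝ)) * R + k * R' := by
    nlinarith [mul_le_mul_of_nonneg_left hR (sub_nonneg.2 k.2.2),
      mul_le_mul_of_nonneg_left hR' k.2.1]
  have hhomotopic := velocityHomotopic_driftCircle hγ hradius (by fun_prop)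
    (continuous_fst.comp γ.continuous) (continuous_snd.comp γ.continuous) hm hD
  simpa only [Function.comp_def, γ.source, γ.target, Icc.coe_zero, Icc.coe_one, sub_zero, sub_self,
    one_mul, zero_mul, add_zero, zero_add] using hhomotopic

end IsOrthonormalPair

theorem two_lt_finrank_E3 : 2 < Module.finrank ℝ E3 := by
  rw [finrank_euclideanSpace_fin]
  norm_num

theorem isVelocity_const {E : Type*} [NormedAddCommGroup E] [NormedSpace ℝ E] [CompleteSpace E]
    {v : E} (hv : v ≠ 0) : IsVelocity v fun _ => v where
  continuous := continuous_const
  isConstrainedOn := .const hv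
  integral_eq := by rw [intervalIntegral.integral_const, sub_zero, one_smul]

namespace SigmaSpace

variable {x y : E3}

theorem norm_sub_le_length (q : SigmaSpace x y) : ‖y - x‖ ≤ q.length := by
  have hle := intervalIntegral.norm_integral_le_of_norm_le_const (a := 0) (b := q.length)
    fun t _ => (q.isUnitTangent_tangent.norm_eq_one t).le
  rwa [q.integral_tangent, one_mul, sub_zero, abs_of_pos q.isUnitTangent_tangent.pos] at hle

theorem length_ne_pi (hxy : ‖y - x‖ < 2) (q : SigmaSpace x y) : q.length ≠ π := by
  intro hlength
  have hchord := two_le_norm_integral_of_lipschitzWith q.isUnitTangent_tangent.norm_eq_one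
    q.isUnitTangent_tangent.lipschitzWith 0
  rw [zero_add, ← hlength, q.integral_tangent] at hchord
  exact hchord.not_gt hxy

theorem isClopen_length_lt_pi (hxy : ‖y - x‖ < 2) :
    IsClopen {q : SigmaSpace x y | q.length < π} := by
  refine ⟨?_, isOpen_lt continuous_length continuous_const⟩
  have hle : {q : SigmaSpace x y | q.length < π} = {q | q.length ≤ π} :=
    Set.ext fun q => (q.length_ne_pi hxy).le_iff_lt.symm
  exact hle ▸ isClosed_le continuous_length continuous_const

theorem joined_driftCircle_of_isWindingPoint {q : SigmaSpace x y} {c R : ℝ} {n : E3} {m : ℕ}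
    (hc : IsWindingPoint q.length q.tangent c R n) (hm : m ≠ 0) (hmq : 2 * q.length ≤ m)
    (hmxy : 2 * ‖y - x‖ ≤ m) :
    Joined q (ofVelocity (hc.isOrthonormalPair.isVelocity_driftCircle hc.two_le hm hmxy)) := by
  have hu := q.isUnitTangent_tangent
  have hint := q.integral_tangent
  have hwound := hc.isVelocity_wound hu hm (φ := m * (2 * π)) (by positivity) hint
  have hinsert : Joined q (ofVelocity hwound) :=
    joined_of_velocityHomotopic hwound (hc.velocityHomotopic_wound_of_tangent hu hm hint)
  exact hinsert.trans <|
    joined_ofVelocity hwound _ (hc.velocityHomotopic_driftCircle_of_wound hu hm hmq hint)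

theorem joined_of_pi_lt_length (hxy : ‖y - x‖ < 2) {q q' : SigmaSpace x y} (hq : π < q.length)
    (hq' : π < q'.length) : Joined q q' := by
  obtain ⟨c, R, n, hc⟩ := q.isUnitTangent_tangent.exists_isWindingPoint hq
    (by rwa [q.integral_tangent])
  obtain ⟨c', R', n', hc'⟩ := q'.isUnitTangent_tangent.exists_isWindingPoint hq'
    (by rwa [q'.integral_tangent])
  obtain ⟨m, hmax⟩ := exists_nat_ge (2 * max q.length q'.length)
  have hmq : 2 * q.length ≤ m := (by gcongr; exact le_max_left _ _ : _ ≤ _).trans hmax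
  have hmq' : 2 * q'.length ≤ m := (by gcongr; exact le_max_right _ _ : _ ≤ _).trans hmax
  have hm : m ≠ 0 := Nat.cast_ne_zero (R := ℝ).1 (by linarith [Real.pi_pos])
  have hmxy : 2 * ‖y - x‖ ≤ m := by linarith [q.norm_sub_le_length]
  have hcircles := joined_ofVelocity
    (hc.isOrthonormalPair.isVelocity_driftCircle hc.two_le hm hmxy)
    (hc'.isOrthonormalPair.isVelocity_driftCircle hc'.two_le hm hmxy) <|
    hc.isOrthonormalPair.velocityHomotopic_driftCircle_of_two_lt_finrank two_lt_finrank_E3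
      hc'.isOrthonormalPair hc.two_le hc'.two_le hm hmxy
  exact ((joined_driftCircle_of_isWindingPoint hc hm hmq hmxy).trans hcircles).trans
    (joined_driftCircle_of_isWindingPoint hc' hm hmq' hmxy).symm

theorem joined_of_length_lt_pi (hxy : y - x ≠ 0) {q q' : SigmaSpace x y} (hq : q.length < π)
    (hq' : q'.length < π) : Joined q q' :=
  have hsegment := isVelocity_const hxy
  (joined_of_velocityHomotopic hsegment
    (q.isUnitTangent_tangent.velocityHomotopic_const hq q.integral_tangent)).trans
    (joined_of_velocityHomotopic hsegment
      (q'.isUnitTangent_tangent.velocityHomotopic_const hq' q'.integral_tangent)).symm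

theorem exists_length_lt_pi (hxy : y - x ≠ 0) (hpi : ‖y - x‖ < π) :
    ∃ q : SigmaSpace x y, q.length < π := by
  have hlength : arcLength (fun _ => y - x) 1 = ‖y - x‖ := by
    rw [arcLength, intervalIntegral.integral_const, sub_zero, one_smul]
  exact ⟨ofVelocity (isVelocity_const hxy), hlength.trans_lt hpi⟩

theorem exists_pi_lt_length (x y : E3) : ∃ q : SigmaSpace x y, π < q.length := by
  have hpair : IsOrthonormalPair (EuclideanSpace.single 0 1 : E3) (EuclideanSpace.single 1 1) :=
    ⟨by simp, by simp, by simp [EuclideanSpace.inner_single_left]⟩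
  obtain ⟨m, hm⟩ := exists_nat_ge (2 * ‖y - x‖)
  have hm' : 2 * ‖y - x‖ ≤ (m + 1 : ℕ) := by
    push_cast
    linarith
  exact ⟨ofVelocity (hpair.isVelocity_driftCircle le_rfl m.succ_ne_zero hm'),
    hpair.pi_lt_arcLength_driftCircle le_rfl m.succ_ne_zero hm'⟩

theorem connectedComponents_mk_eq_iff (hne : y - x ≠ 0) (hxy : ‖y - x‖ < 2)
    {q q' : SigmaSpace x y} :
    ConnectedComponents.mk q = ConnectedComponents.mk q' ↔ (q.length < π ↔ q'.length < π) := by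
  refine ⟨fun h => ?_, fun h => ?_⟩
  · have hclopen := isClopen_length_lt_pi (x := x) (y := y) hxy
    exact ⟨
      fun hq => hclopen.connectedComponent_subset hq (ConnectedComponents.coe_eq_coe'.1 h.symm),
      fun hq' => hclopen.connectedComponent_subset hq' (ConnectedComponents.coe_eq_coe'.1 h)⟩
  · suffices hjoined : Joined q' q from
      ConnectedComponents.coe_eq_coe'.2 (pathComponent_subset_component q' hjoined)
    rcases lt_or_gt_of_ne (q.length_ne_pi hxy) with hq | hq
    · exact joined_of_length_lt_pi hne (h.1 hq) hq
    · have hq' : π < q'.length :=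
        lt_of_le_of_ne (not_lt.1 fun hlt => hq.not_gt (h.2 hlt)) (q'.length_ne_pi hxy).symm
      exact joined_of_pi_lt_length hxy hq' hq

end SigmaSpace

/-- For `0 < ‖x - y‖ < 2`, the space `Σ(x,y)` of 1-constrained
arcs from `x` to `y` with the `C¹` metric has exactly two connected components,
one of which consists exclusively of embedded arcs. -/
theorem sigmaSpace_two_components (x y : E3)
    (hpos : 0 < ‖x - y‖) (hlt : ‖x - y‖ < 2) :
    Nat.card (ConnectedComponents (SigmaSpace x y)) = 2 ∧
    ∃ C : ConnectedComponents (SigmaSpace x y),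
      ∀ q : SigmaSpace x y, ConnectedComponents.mk q = C →
        InjOn q.1.2 (Icc 0 q.1.1) := by
  rw [norm_sub_rev] at hpos hlt
  have hne : y - x ≠ 0 := norm_pos_iff.1 hpos
  obtain ⟨short, hshort⟩ :=
    SigmaSpace.exists_length_lt_pi hne (hlt.trans (by linarith [Real.pi_gt_three]))
  obtain ⟨long, hlong⟩ := SigmaSpace.exists_pi_lt_length x y
  refine ⟨Nat.card_eq_two_iff.2
    ⟨ConnectedComponents.mk short, ConnectedComponents.mk long, fun h => ?_, ?_⟩,
    ConnectedComponents.mk short, fun q hq => ?_⟩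
  · exact hlong.not_gt (((SigmaSpace.connectedComponents_mk_eq_iff hne hlt).1 h).1 hshort)
  · refine eq_univ_of_forall (ConnectedComponents.surjective_coe.forall.2 fun q => ?_)
    by_cases hq : q.length < π
    · exact .inl ((SigmaSpace.connectedComponents_mk_eq_iff hne hlt).2 (iff_of_true hq hshort))
    · exact .inr ((SigmaSpace.connectedComponents_mk_eq_iff hne hlt).2
        (iff_of_false hq hlong.not_gt))
  · exact SigmaSpace.injOn_of_length_lt_pi
      (((SigmaSpace.connectedComponents_mk_eq_iff hne hlt).1 hq).2 hshort)

end
end
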